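/- arXiv:2407.12288 — 3 statements merged into one kernel-verified Lean document; each statement's English description precedes it below -/
import Mathlib

section
/- Fix finite sets Θ, 𝒳, 𝒴 and T ≥ 1, with the model given by θ-independent input kernels q_t and label kernels k_t(· | ν, h_t) as in the misspecified-prior setting, true prior π on Θ, and a misspecified prior π̃ on Θ. Let θ̃ be any additional Θ-valued random variable on the same probability space whose marginal distribution equals π̃ and which is conditionally independent of the data D_T = (X_0, Y_1, …, X_{T−1}, Y_T) given θ. Let P*_t = k_t(· | θ, H_t) be the true predictive and P̃_t = P̂^{π̃}_t(·|H_t) the Bayes posterior predictive under prior π̃. Then, in [0,∞]: (1/T)·∑_{t=0}^{T−1} E[ D_KL( P*_t ‖ P̃_t ) ] ≤ I(θ ; θ̃)/T + (1/T)·∑_{t=0}^{T−1} E[ D_KL( P*_t ‖ k_t(· | θ̃, H_t) ) ], i.e., the misspecified learner's loss is bounded by an estimation-error term I(θ;θ̃)/T plus a misspecification-error term. -/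
/-!
Statement 4 (misspecified learner error bound): in the misspecified-prior setting with true
prior `π` and misspecified prior `π̃`, for any `Θ`-valued random variable `θ̃` with marginal
`π̃` that is conditionally independent of the data given `θ` (encoded by a kernel `lam` with
`∑_ν π(ν)·lam(τ|ν) = π̃(τ)`), the misspecified learner's loss is bounded by
`I(θ;θ̃)/T` plus the misspecification term `(1/T)∑_t E[D_KL(P*_t ‖ k_t(·|θ̃,H_t))]`.
-/

open scoped Classical ENNReal

noncomputable section

/-- Probability of the event `X = a` under the pmf `p` on a finite sample space. -/
def pr {Ω : Type*} [Fintype Ω] (p : Ω → ℝ) {A : Type*} (X : Ω → A) (a : A) : ℝ :=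
  ∑ ω, if X ω = a then p ω else 0

/-- Shannon entropy of a random variable (in nats). -/
def entropy {Ω : Type*} [Fintype Ω] (p : Ω → ℝ) {A : Type*} [Fintype A] (X : Ω → A) : ℝ :=
  ∑ a, Real.negMulLog (pr p X a)

/-- Mutual information `I(X;Y) = H(X) + H(Y) - H(X,Y)` (in nats). -/
def mutualInfo {Ω : Type*} [Fintype Ω] (p : Ω → ℝ) {A B : Type*} [Fintype A] [Fintype B]
    (X : Ω → A) (Y : Ω → B) : ℝ :=
  entropy p X + entropy p Y - entropy p (fun ω => (X ω, Y ω))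

/-- KL divergence between pmfs on a finite set, valued in `[0,∞]`. -/
def klDivF {A : Type*} [Fintype A] (p q : A → ℝ) : ℝ≥0∞ :=
  if ∀ a, q a = 0 → p a = 0 then ENNReal.ofReal (∑ a, p a * Real.log (p a / q a)) else ⊤

variable {Θ 𝒳 𝒴 : Type*} [Fintype Θ] [Fintype 𝒳] [Fintype 𝒴] {T : ℕ}

/-- The history `h_t = (x_{0:t}, y_{1:t})` read off from a full trajectory `(x, y)`. -/
def hist (t : Fin T) (x : Fin T → 𝒳) (y : Fin T → 𝒴) :
    (Fin ((t : ℕ) + 1) → 𝒳) × (Fin (t : ℕ) → 𝒴) :=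
  (fun i => x (Fin.castLE t.isLt i), fun i => y (Fin.castLE (le_of_lt t.isLt) i))

/-- The past data `(x_{0:t-1}, y_{1:t})` strictly before the input `x_t`. -/
def past (t : Fin T) (x : Fin T → 𝒳) (y : Fin T → 𝒴) :
    (Fin (t : ℕ) → 𝒳) × (Fin (t : ℕ) → 𝒴) :=
  (fun i => x (Fin.castLE (le_of_lt t.isLt) i), fun i => y (Fin.castLE (le_of_lt t.isLt) i))

/-- Likelihood of the labels `y_{1:t}` of the history `h_t` under parameter `ν`. -/
def partialLik (k : ∀ t : Fin T, Θ → ((Fin ((t : ℕ) + 1) → 𝒳) × (Fin (t : ℕ) → 𝒴)) → 𝒴 → ℝ)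
    (t : Fin T) (ν : Θ) (x : Fin T → 𝒳) (y : Fin T → 𝒴) : ℝ :=
  ∏ s : Fin T, if (s : ℕ) < (t : ℕ) then k s ν (hist s x y) (y s) else 1

/-- Bayes posterior of `θ` given the history `h_t`, under prior `ρ` and kernels `k`. -/
def post (k : ∀ t : Fin T, Θ → ((Fin ((t : ℕ) + 1) → 𝒳) × (Fin (t : ℕ) → 𝒴)) → 𝒴 → ℝ)
    (ρ : Θ → ℝ) (t : Fin T) (x : Fin T → 𝒳) (y : Fin T → 𝒴) (ν : Θ) : ℝ :=
  ρ ν * partialLik k t ν x y / ∑ ν', ρ ν' * partialLik k t ν' x y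

/-- Bayes posterior predictive `P̂^ρ_t(b | h_t) = ∑_ν ρ(ν|h_t) k_t(b|ν,h_t)`. -/
def predictive (k : ∀ t : Fin T, Θ → ((Fin ((t : ℕ) + 1) → 𝒳) × (Fin (t : ℕ) → 𝒴)) → 𝒴 → ℝ)
    (ρ : Θ → ℝ) (t : Fin T) (x : Fin T → 𝒳) (y : Fin T → 𝒴) (b : 𝒴) : ℝ :=
  ∑ ν, post k ρ t x y ν * k t ν (hist t x y) b

/-- Likelihood of a full trajectory `(x,y)` given parameter `ν`. -/
def lik (q : ∀ t : Fin T, ((Fin (t : ℕ) → 𝒳) × (Fin (t : ℕ) → 𝒴)) → 𝒳 → ℝ)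
    (k : ∀ t : Fin T, Θ → ((Fin ((t : ℕ) + 1) → 𝒳) × (Fin (t : ℕ) → 𝒴)) → 𝒴 → ℝ)
    (ν : Θ) (x : Fin T → 𝒳) (y : Fin T → 𝒴) : ℝ :=
  ∏ t : Fin T, q t (past t x y) (x t) * k t ν (hist t x y) (y t)

set_option linter.unusedSectionVars false

section Resample

/-- Resampling a single coordinate. -/
theorem resample_sum {ι A : Type*} [Fintype ι] [DecidableEq ι] [Fintype A] (t : ι) (F : (ι → A) → ℝ) :
    ∑ y : ι → A, ∑ b : A, F (Function.update y t b) = (Fintype.card A : ℝ) * ∑ y, F y := by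
  have hinv : Function.Involutive
      (fun p : (ι → A) × A => ((Function.update p.1 t p.2, p.1 t) : (ι → A) × A)) := by
    intro p
    simp
  have h := Equiv.sum_comp hinv.toPerm (fun p : (ι → A) × A => F p.1)
  simp only [Function.Involutive.coe_toPerm] at h
  rw [Fintype.sum_prod_type, Fintype.sum_prod_type] at h
  simp only at h
  rw [h, Finset.mul_sum]
  simp

theorem resample_eq {ι A : Type*} [Fintype ι] [DecidableEq ι] [Fintype A] (t : ι) (F G : (ι → A) → ℝ)
    (h : ∀ y, ∑ b : A, F (Function.update y t b) = ∑ b : A, G (Function.update y t b)) :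
    ∑ y, F y = ∑ y, G y := by
  rcases isEmpty_or_nonempty A with hA | hA
  · have : IsEmpty (ι → A) := ⟨fun f => hA.elim (f t)⟩
    simp
  · have h1 := resample_sum t F
    have h2 := resample_sum t G
    rw [Finset.sum_congr rfl (fun y _ => h y), h2] at h1
    have hc : (Fintype.card A : ℝ) ≠ 0 := by
      exact_mod_cast Fintype.card_ne_zero
    exact (mul_left_cancel₀ hc h1).symm

end Resample

theorem hist_update_y (t s : Fin T) (h : t ≤ s) (x : Fin T → 𝒳) (y : Fin T → 𝒴) (b : 𝒴) :
    hist t x (Function.update y s b) = hist t x y := by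
  unfold hist
  refine Prod.ext rfl ?_
  funext i
  apply Function.update_of_ne
  intro he
  have h1 := congrArg Fin.val he
  have h2 := i.isLt
  have h3 : (t : ℕ) ≤ s := h
  simp at h1
  omega

theorem hist_update_x (t s : Fin T) (h : t < s) (x : Fin T → 𝒳) (y : Fin T → 𝒴) (a : 𝒳) :
    hist t (Function.update x s a) y = hist t x y := by
  unfold hist
  refine Prod.ext ?_ rfl
  funext i
  apply Function.update_of_ne
  intro he
  have h1 := congrArg Fin.val he
  have h2 := i.isLt
  have h3 : (t : ℕ) < s := h
  simp at h1
  omega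

theorem past_update_y (t s : Fin T) (h : t ≤ s) (x : Fin T → 𝒳) (y : Fin T → 𝒴) (b : 𝒴) :
    past t x (Function.update y s b) = past t x y := by
  unfold past
  refine Prod.ext rfl ?_
  funext i
  apply Function.update_of_ne
  intro he
  have h1 := congrArg Fin.val he
  have h2 := i.isLt
  have h3 : (t : ℕ) ≤ s := h
  simp at h1
  omega

theorem past_update_x (t s : Fin T) (h : t ≤ s) (x : Fin T → 𝒳) (y : Fin T → 𝒴) (a : 𝒳) :
    past t (Function.update x s a) y = past t x y := by
  unfold past
  refine Prod.ext ?_ rfl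
  funext i
  apply Function.update_of_ne
  intro he
  have h1 := congrArg Fin.val he
  have h2 := i.isLt
  have h3 : (t : ℕ) ≤ s := h
  simp at h1
  omega

/-- Trajectory law with kernels replaced by the constant `c` from time `n` on. -/
def likUpTo (q : ∀ t : Fin T, ((Fin (t : ℕ) → 𝒳) × (Fin (t : ℕ) → 𝒴)) → 𝒳 → ℝ)
    (k : ∀ t : Fin T, Θ → ((Fin ((t : ℕ) + 1) → 𝒳) × (Fin (t : ℕ) → 𝒴)) → 𝒴 → ℝ)
    (c : ℝ) (n : ℕ) (ν : Θ) (x : Fin T → 𝒳) (y : Fin T → 𝒴) : ℝ :=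
  ∏ r : Fin T, if (r : ℕ) < n then q r (past r x y) (x r) * k r ν (hist r x y) (y r) else c

/-- The factors of `likUpTo` other than time `s`. -/
def likRest (q : ∀ t : Fin T, ((Fin (t : ℕ) → 𝒳) × (Fin (t : ℕ) → 𝒴)) → 𝒳 → ℝ)
    (k : ∀ t : Fin T, Θ → ((Fin ((t : ℕ) + 1) → 𝒳) × (Fin (t : ℕ) → 𝒴)) → 𝒴 → ℝ)
    (c : ℝ) (s : Fin T) (ν : Θ) (x : Fin T → 𝒳) (y : Fin T → 𝒴) : ℝ :=
  ∏ r ∈ Finset.univ.erase s,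
    if (r : ℕ) < (s : ℕ) then q r (past r x y) (x r) * k r ν (hist r x y) (y r) else c

theorem likUpTo_succ (q : ∀ t : Fin T, ((Fin (t : ℕ) → 𝒳) × (Fin (t : ℕ) → 𝒴)) → 𝒳 → ℝ)
    (k : ∀ t : Fin T, Θ → ((Fin ((t : ℕ) + 1) → 𝒳) × (Fin (t : ℕ) → 𝒴)) → 𝒴 → ℝ)
    (c : ℝ) (s : Fin T) (ν : Θ) (x : Fin T → 𝒳) (y : Fin T → 𝒴) :
    likUpTo q k c (s + 1) ν x y =
      (q s (past s x y) (x s) * k s ν (hist s x y) (y s)) * likRest q k c s ν x y := by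
  unfold likUpTo likRest
  rw [← Finset.mul_prod_erase Finset.univ _ (Finset.mem_univ s)]
  rw [if_pos (Nat.lt_succ_self _)]
  congr 1
  apply Finset.prod_congr rfl
  intro r hr
  have hne : (r : ℕ) ≠ s := fun h => (Finset.ne_of_mem_erase hr) (Fin.ext h)
  by_cases h : (r : ℕ) < s
  · rw [if_pos h, if_pos (by omega)]
  · rw [if_neg h, if_neg (by omega)]

theorem likUpTo_self (q : ∀ t : Fin T, ((Fin (t : ℕ) → 𝒳) × (Fin (t : ℕ) → 𝒴)) → 𝒳 → ℝ)
    (k : ∀ t : Fin T, Θ → ((Fin ((t : ℕ) + 1) → 𝒳) × (Fin (t : ℕ) → 𝒴)) → 𝒴 → ℝ)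
    (c : ℝ) (s : Fin T) (ν : Θ) (x : Fin T → 𝒳) (y : Fin T → 𝒴) :
    likUpTo q k c s ν x y = c * likRest q k c s ν x y := by
  unfold likUpTo likRest
  rw [← Finset.mul_prod_erase Finset.univ _ (Finset.mem_univ s)]
  rw [if_neg (lt_irrefl _)]

theorem likRest_update_y (q : ∀ t : Fin T, ((Fin (t : ℕ) → 𝒳) × (Fin (t : ℕ) → 𝒴)) → 𝒳 → ℝ)
    (k : ∀ t : Fin T, Θ → ((Fin ((t : ℕ) + 1) → 𝒳) × (Fin (t : ℕ) → 𝒴)) → 𝒴 → ℝ)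
    (c : ℝ) (s : Fin T) (ν : Θ) (x : Fin T → 𝒳) (y : Fin T → 𝒴) (b : 𝒴) :
    likRest q k c s ν x (Function.update y s b) = likRest q k c s ν x y := by
  unfold likRest
  apply Finset.prod_congr rfl
  intro r hr
  by_cases h : (r : ℕ) < s
  · have hle : r ≤ s := le_of_lt h
    rw [if_pos h, if_pos h, past_update_y r s hle, hist_update_y r s hle,
      Function.update_of_ne (Finset.ne_of_mem_erase hr)]
  · rw [if_neg h, if_neg h]

theorem likRest_update_x (q : ∀ t : Fin T, ((Fin (t : ℕ) → 𝒳) × (Fin (t : ℕ) → 𝒴)) → 𝒳 → ℝ)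
    (k : ∀ t : Fin T, Θ → ((Fin ((t : ℕ) + 1) → 𝒳) × (Fin (t : ℕ) → 𝒴)) → 𝒴 → ℝ)
    (c : ℝ) (s : Fin T) (ν : Θ) (x : Fin T → 𝒳) (y : Fin T → 𝒴) (a : 𝒳) :
    likRest q k c s ν (Function.update x s a) y = likRest q k c s ν x y := by
  unfold likRest
  apply Finset.prod_congr rfl
  intro r hr
  by_cases h : (r : ℕ) < s
  · rw [if_pos h, if_pos h, past_update_x r s (le_of_lt h), hist_update_x r s h,
      Function.update_of_ne (Finset.ne_of_mem_erase hr)]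
  · rw [if_neg h, if_neg h]

/-- Marginalising the time-`s` pair. -/
theorem likUpTo_step [Nonempty 𝒳] [Nonempty 𝒴]
    (q : ∀ t : Fin T, ((Fin (t : ℕ) → 𝒳) × (Fin (t : ℕ) → 𝒴)) → 𝒳 → ℝ)
    (k : ∀ t : Fin T, Θ → ((Fin ((t : ℕ) + 1) → 𝒳) × (Fin (t : ℕ) → 𝒴)) → 𝒴 → ℝ)
    (hq : ∀ t h, ∑ a, q t h a = 1) (hk : ∀ t ν h, ∑ b, k t ν h b = 1)
    (s : Fin T) (ν : Θ) (f : (Fin T → 𝒳) → (Fin T → 𝒴) → ℝ)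
    (hx : ∀ x y a, f (Function.update x s a) y = f x y)
    (hy : ∀ x y b, f x (Function.update y s b) = f x y) :
    ∑ x, ∑ y, likUpTo q k ((Fintype.card 𝒳 : ℝ)⁻¹ * (Fintype.card 𝒴 : ℝ)⁻¹) (s + 1) ν x y * f x y
    = ∑ x, ∑ y, likUpTo q k ((Fintype.card 𝒳 : ℝ)⁻¹ * (Fintype.card 𝒴 : ℝ)⁻¹) s ν x y * f x y := by
  have cX : (Fintype.card 𝒳 : ℝ) ≠ 0 := by exact_mod_cast Fintype.card_ne_zero
  have cY : (Fintype.card 𝒴 : ℝ) ≠ 0 := by exact_mod_cast Fintype.card_ne_zero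
  set c : ℝ := (Fintype.card 𝒳 : ℝ)⁻¹ * (Fintype.card 𝒴 : ℝ)⁻¹ with hc
  have h1 : ∀ x, ∑ y, likUpTo q k c (s + 1) ν x y * f x y
      = ∑ y, q s (past s x y) (x s) * (Fintype.card 𝒴 : ℝ)⁻¹ * likRest q k c s ν x y * f x y := by
    intro x
    apply resample_eq s
    intro y
    simp only [likUpTo_succ, likRest_update_y, hy, past_update_y s s le_rfl,
      hist_update_y s s le_rfl, Function.update_self]
    rw [Finset.sum_const, Finset.card_univ, nsmul_eq_mul]
    have : ∀ b, q s (past s x y) (x s) * k s ν (hist s x y) b * likRest q k c s ν x y * f x y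
      = (q s (past s x y) (x s) * likRest q k c s ν x y * f x y) * k s ν (hist s x y) b := by
      intro b; ring
    simp only [this]
    rw [← Finset.mul_sum, hk]
    field_simp
  simp only [h1, likUpTo_self]
  rw [Finset.sum_comm, Finset.sum_comm (s := (Finset.univ : Finset (Fin T → 𝒳)))]
  apply Finset.sum_congr rfl
  intro y _
  apply resample_eq s
  intro x
  simp only [likRest_update_x, hx, past_update_x s s le_rfl, Function.update_self]
  rw [Finset.sum_const, Finset.card_univ, nsmul_eq_mul]
  simp only [mul_assoc]
  rw [← Finset.sum_mul, hq, hc]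
  field_simp

theorem likUpTo_top (q : ∀ t : Fin T, ((Fin (t : ℕ) → 𝒳) × (Fin (t : ℕ) → 𝒴)) → 𝒳 → ℝ)
    (k : ∀ t : Fin T, Θ → ((Fin ((t : ℕ) + 1) → 𝒳) × (Fin (t : ℕ) → 𝒴)) → 𝒴 → ℝ)
    (c : ℝ) (ν : Θ) (x : Fin T → 𝒳) (y : Fin T → 𝒴) :
    likUpTo q k c T ν x y = lik q k ν x y := by
  unfold likUpTo lik
  apply Finset.prod_congr rfl
  intro r _
  rw [if_pos r.isLt]

theorem lik_marginal [Nonempty 𝒳] [Nonempty 𝒴]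
    (q : ∀ t : Fin T, ((Fin (t : ℕ) → 𝒳) × (Fin (t : ℕ) → 𝒴)) → 𝒳 → ℝ)
    (k : ∀ t : Fin T, Θ → ((Fin ((t : ℕ) + 1) → 𝒳) × (Fin (t : ℕ) → 𝒴)) → 𝒴 → ℝ)
    (hq : ∀ t h, ∑ a, q t h a = 1) (hk : ∀ t ν h, ∑ b, k t ν h b = 1)
    (n : ℕ) (hn : n ≤ T) (ν : Θ) (f : (Fin T → 𝒳) → (Fin T → 𝒴) → ℝ)
    (hx : ∀ (s : Fin T) x y a, n ≤ (s : ℕ) → f (Function.update x s a) y = f x y)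
    (hy : ∀ (s : Fin T) x y b, n ≤ (s : ℕ) → f x (Function.update y s b) = f x y) :
    ∑ x, ∑ y, lik q k ν x y * f x y
    = ∑ x, ∑ y, likUpTo q k ((Fintype.card 𝒳 : ℝ)⁻¹ * (Fintype.card 𝒴 : ℝ)⁻¹) n ν x y * f x y := by
  have key : ∀ m, n ≤ m → m ≤ T →
    ∑ x, ∑ y, likUpTo q k ((Fintype.card 𝒳 : ℝ)⁻¹ * (Fintype.card 𝒴 : ℝ)⁻¹) m ν x y * f x y
    = ∑ x, ∑ y, likUpTo q k ((Fintype.card 𝒳 : ℝ)⁻¹ * (Fintype.card 𝒴 : ℝ)⁻¹) n ν x y * f x y := by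
    intro m hm
    induction m, hm using Nat.le_induction with
    | base => intro _; rfl
    | succ m hm ih =>
      intro hT
      rw [← ih (by omega)]
      exact likUpTo_step q k hq hk ⟨m, hT⟩ ν f (fun x y a => hx _ x y a hm)
        (fun x y b => hy _ x y b hm)
  rw [← key T hn le_rfl]
  simp only [likUpTo_top]

theorem lik_sum_one [Nonempty 𝒳] [Nonempty 𝒴]
    (q : ∀ t : Fin T, ((Fin (t : ℕ) → 𝒳) × (Fin (t : ℕ) → 𝒴)) → 𝒳 → ℝ)
    (k : ∀ t : Fin T, Θ → ((Fin ((t : ℕ) + 1) → 𝒳) × (Fin (t : ℕ) → 𝒴)) → 𝒴 → ℝ)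
    (hq : ∀ t h, ∑ a, q t h a = 1) (hk : ∀ t ν h, ∑ b, k t ν h b = 1) (ν : Θ) :
    ∑ x, ∑ y, lik q k ν x y = 1 := by
  have cX : (Fintype.card 𝒳 : ℝ) ≠ 0 := by exact_mod_cast Fintype.card_ne_zero
  have cY : (Fintype.card 𝒴 : ℝ) ≠ 0 := by exact_mod_cast Fintype.card_ne_zero
  have h := lik_marginal q k hq hk 0 (Nat.zero_le _) ν (fun _ _ => 1)
    (fun _ _ _ _ _ => rfl) (fun _ _ _ _ _ => rfl)
  simp only [mul_one] at h
  rw [h]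
  simp only [likUpTo, Nat.not_lt_zero, if_false, Finset.prod_const, Finset.card_univ,
    Finset.sum_const, Fintype.card_fin, Fintype.card_fun, nsmul_eq_mul, Nat.cast_pow]
  rw [← mul_pow, ← mul_pow]
  have : (Fintype.card 𝒳 : ℝ) * ((Fintype.card 𝒴 : ℝ) * ((Fintype.card 𝒳 : ℝ)⁻¹
      * (Fintype.card 𝒴 : ℝ)⁻¹)) = 1 := by field_simp
  rw [this, one_pow]

/-- Tower property: averaging over the label at time `t`. -/
theorem lik_tower [Nonempty 𝒳] [Nonempty 𝒴]
    (q : ∀ t : Fin T, ((Fin (t : ℕ) → 𝒳) × (Fin (t : ℕ) → 𝒴)) → 𝒳 → ℝ)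
    (k : ∀ t : Fin T, Θ → ((Fin ((t : ℕ) + 1) → 𝒳) × (Fin (t : ℕ) → 𝒴)) → 𝒴 → ℝ)
    (hq : ∀ t h, ∑ a, q t h a = 1) (hk : ∀ t ν h, ∑ b, k t ν h b = 1)
    (t : Fin T) (ν : Θ) (G : (Fin T → 𝒳) → (Fin T → 𝒴) → 𝒴 → ℝ)
    (hx : ∀ (s : Fin T) x y a, t < s → G (Function.update x s a) y = G x y)
    (hy : ∀ (s : Fin T) x y b, t ≤ s → G x (Function.update y s b) = G x y) :
    ∑ x, ∑ y, lik q k ν x y * ∑ b, k t ν (hist t x y) b * G x y b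
      = ∑ x, ∑ y, lik q k ν x y * G x y (y t) := by
  rw [lik_marginal q k hq hk (t + 1) t.isLt ν
      (fun x y => ∑ b, k t ν (hist t x y) b * G x y b) ?_ ?_,
    lik_marginal q k hq hk (t + 1) t.isLt ν (fun x y => G x y (y t)) ?_ ?_]
  · apply Finset.sum_congr rfl
    intro x _
    apply resample_eq t
    intro y
    simp only [likUpTo_succ, likRest_update_y, hy t _ _ _ le_rfl, past_update_y t t le_rfl,
      hist_update_y t t le_rfl, Function.update_self]
    rw [← Finset.sum_mul, ← Finset.sum_mul, ← Finset.mul_sum, hk, Finset.mul_sum]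
    apply Finset.sum_congr rfl
    intro b _
    ring
  · intro s x y a hs
    have hs' : t < s := hs
    simp only [hx s x y a hs']
  · intro s x y b hs
    have hs' : t < s := hs
    simp only [hy s x y b hs'.le, Function.update_of_ne hs'.ne]
  · intro s x y a hs
    have hs' : t < s := hs
    simp only [hx s x y a hs', hist_update_x t s hs']
  · intro s x y b hs
    have hs' : t < s := hs
    simp only [hy s x y b hs'.le, hist_update_y t s hs'.le]

theorem partialLik_update_y
    (k : ∀ t : Fin T, Θ → ((Fin ((t : ℕ) + 1) → 𝒳) × (Fin (t : ℕ) → 𝒴)) → 𝒴 → ℝ)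
    (t s : Fin T) (h : t ≤ s) (ν : Θ) (x : Fin T → 𝒳) (y : Fin T → 𝒴) (b : 𝒴) :
    partialLik k t ν x (Function.update y s b) = partialLik k t ν x y := by
  unfold partialLik
  apply Finset.prod_congr rfl
  intro r _
  by_cases hr : (r : ℕ) < t
  · have hrs : r < s := lt_of_lt_of_le hr h
    rw [if_pos hr, if_pos hr, hist_update_y r s hrs.le, Function.update_of_ne hrs.ne]
  · rw [if_neg hr, if_neg hr]

theorem partialLik_update_x
    (k : ∀ t : Fin T, Θ → ((Fin ((t : ℕ) + 1) → 𝒳) × (Fin (t : ℕ) → 𝒴)) → 𝒴 → ℝ)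
    (t s : Fin T) (h : t < s) (ν : Θ) (x : Fin T → 𝒳) (y : Fin T → 𝒴) (a : 𝒳) :
    partialLik k t ν (Function.update x s a) y = partialLik k t ν x y := by
  unfold partialLik
  apply Finset.prod_congr rfl
  intro r _
  by_cases hr : (r : ℕ) < t
  · have hrs : r < s := lt_trans hr h
    rw [if_pos hr, if_pos hr, hist_update_x r s hrs]
  · rw [if_neg hr, if_neg hr]

theorem predictive_update_y
    (k : ∀ t : Fin T, Θ → ((Fin ((t : ℕ) + 1) → 𝒳) × (Fin (t : ℕ) → 𝒴)) → 𝒴 → ℝ)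
    (ρ : Θ → ℝ) (t s : Fin T) (h : t ≤ s) (x : Fin T → 𝒳) (y : Fin T → 𝒴) (b : 𝒴) :
    predictive k ρ t x (Function.update y s b) = predictive k ρ t x y := by
  funext b'
  simp only [predictive, post, partialLik_update_y k t s h, hist_update_y t s h]

theorem predictive_update_x
    (k : ∀ t : Fin T, Θ → ((Fin ((t : ℕ) + 1) → 𝒳) × (Fin (t : ℕ) → 𝒴)) → 𝒴 → ℝ)
    (ρ : Θ → ℝ) (t s : Fin T) (h : t < s) (x : Fin T → 𝒳) (y : Fin T → 𝒴) (a : 𝒳) :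
    predictive k ρ t (Function.update x s a) y = predictive k ρ t x y := by
  funext b'
  simp only [predictive, post, partialLik_update_x k t s h, hist_update_x t s h]

/-- Label likelihood up to an arbitrary natural time. -/
def plik (k : ∀ t : Fin T, Θ → ((Fin ((t : ℕ) + 1) → 𝒳) × (Fin (t : ℕ) → 𝒴)) → 𝒴 → ℝ)
    (n : ℕ) (ν : Θ) (x : Fin T → 𝒳) (y : Fin T → 𝒴) : ℝ :=
  ∏ s : Fin T, if (s : ℕ) < n then k s ν (hist s x y) (y s) else 1

theorem plik_succ (k : ∀ t : Fin T, Θ → ((Fin ((t : ℕ) + 1) → 𝒳) × (Fin (t : ℕ) → 𝒴)) → 𝒴 → ℝ)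
    (t : Fin T) (ν : Θ) (x : Fin T → 𝒳) (y : Fin T → 𝒴) :
    plik k (t + 1) ν x y = plik k t ν x y * k t ν (hist t x y) (y t) := by
  unfold plik
  rw [← Finset.mul_prod_erase Finset.univ _ (Finset.mem_univ t),
    ← Finset.mul_prod_erase Finset.univ (fun s : Fin T => if (s : ℕ) < (t : ℕ) then _ else _)
      (Finset.mem_univ t)]
  rw [if_pos (Nat.lt_succ_self _), if_neg (lt_irrefl _), one_mul, mul_comm]
  congr 1
  apply Finset.prod_congr rfl
  intro r hr
  have hne : (r : ℕ) ≠ t := fun h => (Finset.ne_of_mem_erase hr) (Fin.ext h)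
  by_cases h : (r : ℕ) < t
  · rw [if_pos h, if_pos (by omega)]
  · rw [if_neg h, if_neg (by omega)]

theorem plik_nonneg (k : ∀ t : Fin T, Θ → ((Fin ((t : ℕ) + 1) → 𝒳) × (Fin (t : ℕ) → 𝒴)) → 𝒴 → ℝ)
    (hk : ∀ t ν h b, 0 ≤ k t ν h b) (n : ℕ) (ν : Θ) (x : Fin T → 𝒳) (y : Fin T → 𝒴) :
    0 ≤ plik k n ν x y := by
  unfold plik
  apply Finset.prod_nonneg
  intro r _
  split_ifs
  · exact hk _ _ _ _
  · exact zero_le_one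

theorem predictive_eq (k : ∀ t : Fin T, Θ → ((Fin ((t : ℕ) + 1) → 𝒳) × (Fin (t : ℕ) → 𝒴)) → 𝒴 → ℝ)
    (ρ : Θ → ℝ) (t : Fin T) (x : Fin T → 𝒳) (y : Fin T → 𝒴) (b : 𝒴) :
    predictive k ρ t x y b = (∑ ν, ρ ν * plik k t ν x y * k t ν (hist t x y) b)
      / ∑ ν, ρ ν * plik k t ν x y := by
  unfold predictive post
  rw [Finset.sum_div]
  apply Finset.sum_congr rfl
  intro ν _
  change ρ ν * plik k t ν x y / (∑ ν', ρ ν' * plik k t ν' x y) * _ = _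
  ring

/-- Gibbs inequality. -/
theorem gibbs {A : Type*} [Fintype A] (p r : A → ℝ) (hp : ∀ a, 0 ≤ p a) (hr : ∀ a, 0 ≤ r a)
    (hp1 : ∑ a, p a = 1) (hr1 : ∑ a, r a = 1) (hac : ∀ a, r a = 0 → p a = 0) :
    0 ≤ ∑ a, p a * Real.log (p a / r a) := by
  have h : ∀ a, p a - r a ≤ p a * Real.log (p a / r a) := by
    intro a
    rcases (hp a).eq_or_lt with h0 | h0
    · rw [← h0]; simpa using hr a
    · have hra : 0 < r a := lt_of_le_of_ne (hr a) (fun h => h0.ne' (hac a h.symm))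
      have h2 := Real.log_le_sub_one_of_pos (div_pos hra h0)
      have h3 : Real.log (p a / r a) = - Real.log (r a / p a) := by
        rw [← Real.log_inv, inv_div]
      have h4 : p a * (r a / p a) = r a := by field_simp
      rw [h3]
      nlinarith
  calc (0 : ℝ) = ∑ a, (p a - r a) := by rw [Finset.sum_sub_distrib, hp1, hr1, sub_self]
    _ ≤ _ := Finset.sum_le_sum (fun a _ => h a)

theorem ofReal_sum5 {A B C D E : Type*} [Fintype A] [Fintype B] [Fintype C] [Fintype D] [Fintype E]
    (f : A → B → C → D → E → ℝ) (hf : ∀ a b c d e, 0 ≤ f a b c d e) :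
    ∑ a, ∑ b, ∑ c, ∑ d, ∑ e, ENNReal.ofReal (f a b c d e)
      = ENNReal.ofReal (∑ a, ∑ b, ∑ c, ∑ d, ∑ e, f a b c d e) := by
  have h4 : ∀ a b c d, 0 ≤ ∑ e, f a b c d e := fun a b c d =>
    Finset.sum_nonneg fun e _ => hf a b c d e
  have h3 : ∀ a b c, 0 ≤ ∑ d, ∑ e, f a b c d e := fun a b c =>
    Finset.sum_nonneg fun d _ => h4 a b c d
  have h2 : ∀ a b, 0 ≤ ∑ c, ∑ d, ∑ e, f a b c d e := fun a b =>
    Finset.sum_nonneg fun c _ => h3 a b c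
  have h1 : ∀ a, 0 ≤ ∑ b, ∑ c, ∑ d, ∑ e, f a b c d e := fun a =>
    Finset.sum_nonneg fun b _ => h2 a b
  rw [ENNReal.ofReal_sum_of_nonneg fun a _ => h1 a]
  refine Finset.sum_congr rfl fun a _ => ?_
  rw [ENNReal.ofReal_sum_of_nonneg fun b _ => h2 a b]
  refine Finset.sum_congr rfl fun b _ => ?_
  rw [ENNReal.ofReal_sum_of_nonneg fun c _ => h3 a b c]
  refine Finset.sum_congr rfl fun c _ => ?_
  rw [ENNReal.ofReal_sum_of_nonneg fun d _ => h4 a b c d]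
  refine Finset.sum_congr rfl fun d _ => ?_
  rw [ENNReal.ofReal_sum_of_nonneg fun e _ => hf a b c d e]

theorem sum5_rotate {A B C D E : Type*} [Fintype A] [Fintype B] [Fintype C] [Fintype D] [Fintype E]
    (f : A → B → C → D → E → ℝ) :
    ∑ a, ∑ b, ∑ c, ∑ d, ∑ e, f a b c d e = ∑ b, ∑ c, ∑ d, ∑ e, ∑ a, f a b c d e := by
  rw [Finset.sum_comm]
  refine Finset.sum_congr rfl fun b _ => ?_
  rw [Finset.sum_comm]
  refine Finset.sum_congr rfl fun c _ => ?_
  rw [Finset.sum_comm]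
  refine Finset.sum_congr rfl fun d _ => ?_
  rw [Finset.sum_comm]

theorem sum5_le_top {A B C D E : Type*} [Fintype A] [Fintype B] [Fintype C] [Fintype D] [Fintype E]
    (f : A → B → C → D → E → ℝ≥0∞) (a : A) (b : B) (c : C) (d : D) (e : E)
    (h : f a b c d e = ⊤) :
    ∑ a, ∑ b, ∑ c, ∑ d, ∑ e, f a b c d e = ⊤ := by
  simp only [ENNReal.sum_eq_top]
  exact ⟨a, Finset.mem_univ _, b, Finset.mem_univ _, c, Finset.mem_univ _, d, Finset.mem_univ _,
    e, Finset.mem_univ _, h⟩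

theorem mutualInfo_eq {α β : Type*} [Fintype α] [Fintype β] (π πt : Θ → ℝ) (lam : Θ → Θ → ℝ)
    (hlam : ∀ ν, (∀ τ, 0 ≤ lam ν τ) ∧ ∑ τ, lam ν τ = 1)
    (hmarg : ∀ τ, ∑ ν, π ν * lam ν τ = πt τ)
    (L : Θ → α → β → ℝ) (hL : ∀ ν, ∑ x, ∑ y, L ν x y = 1) :
    mutualInfo (fun ω : Θ × Θ × α × β => π ω.1 * lam ω.1 ω.2.1 * L ω.1 ω.2.2.1 ω.2.2.2)
      (fun ω => ω.1) (fun ω => ω.2.1)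
    = ∑ ν, ∑ τ, π ν * lam ν τ *
        (Real.log (π ν * lam ν τ) - Real.log (π ν) - Real.log (πt τ)) := by
  have hs : ∀ ν τ, ∑ x, ∑ y, π ν * lam ν τ * L ν x y = π ν * lam ν τ := by
    intro ν τ
    simp only [← Finset.mul_sum]
    rw [hL, mul_one]
  have h1 : ∀ ν, pr (fun ω : Θ × Θ × α × β => π ω.1 * lam ω.1 ω.2.1 * L ω.1 ω.2.2.1 ω.2.2.2)
      (fun ω => ω.1) ν = π ν := by
    intro ν
    simp only [pr, Fintype.sum_prod_type]
    rw [Finset.sum_eq_single ν]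
    · simp only [if_true, hs]
      rw [← Finset.mul_sum, (hlam ν).2, mul_one]
    · intro b _ hb
      simp [hb]
    · intro h; exact absurd (Finset.mem_univ _) h
  have h2 : ∀ τ, pr (fun ω : Θ × Θ × α × β => π ω.1 * lam ω.1 ω.2.1 * L ω.1 ω.2.2.1 ω.2.2.2)
      (fun ω => ω.2.1) τ = πt τ := by
    intro τ
    simp only [pr, Fintype.sum_prod_type]
    rw [← hmarg τ]
    refine Finset.sum_congr rfl fun ν _ => ?_
    rw [Finset.sum_eq_single τ]
    · simp only [if_true, hs]
    · intro b _ hb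
      simp [hb]
    · intro h; exact absurd (Finset.mem_univ _) h
  have h3 : ∀ ν τ, pr (fun ω : Θ × Θ × α × β => π ω.1 * lam ω.1 ω.2.1 * L ω.1 ω.2.2.1 ω.2.2.2)
      (fun ω => (ω.1, ω.2.1)) (ν, τ) = π ν * lam ν τ := by
    intro ν τ
    simp only [pr, Fintype.sum_prod_type]
    rw [Finset.sum_eq_single ν]
    · rw [Finset.sum_eq_single τ]
      · simp only [if_true, hs]
      · intro b _ hb
        simp [hb]
      · intro h; exact absurd (Finset.mem_univ _) h
    · intro b _ hb
      simp [hb]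
    · intro h; exact absurd (Finset.mem_univ _) h
  unfold mutualInfo entropy
  simp only [h1, h2]
  rw [Fintype.sum_prod_type]
  simp only [h3, Real.negMulLog, mul_sub, Finset.sum_sub_distrib]
  have e1 : ∑ ν, ∑ τ, π ν * lam ν τ * Real.log (π ν) = ∑ ν, π ν * Real.log (π ν) := by
    refine Finset.sum_congr rfl fun ν _ => ?_
    rw [← Finset.sum_mul, ← Finset.mul_sum, (hlam ν).2, mul_one]
  have e2 : ∑ ν, ∑ τ, π ν * lam ν τ * Real.log (πt τ) = ∑ τ, πt τ * Real.log (πt τ) := by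
    rw [Finset.sum_comm]
    refine Finset.sum_congr rfl fun τ _ => ?_
    rw [← Finset.sum_mul, hmarg]
  rw [e1, e2]
  simp only [neg_mul, Finset.sum_neg_distrib]
  ring

/-- Positivity facts on the support of the joint law. -/
theorem support_facts
    (q : ∀ t : Fin T, ((Fin (t : ℕ) → 𝒳) × (Fin (t : ℕ) → 𝒴)) → 𝒳 → ℝ)
    (k : ∀ t : Fin T, Θ → ((Fin ((t : ℕ) + 1) → 𝒳) × (Fin (t : ℕ) → 𝒴)) → 𝒴 → ℝ)
    (hk : ∀ t ν h b, 0 ≤ k t ν h b)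
    (π πt : Θ → ℝ) (hπ : ∀ ν, 0 ≤ π ν) (hπt : ∀ ν, 0 ≤ πt ν)
    (lam : Θ → Θ → ℝ) (hlam : ∀ ν τ, 0 ≤ lam ν τ)
    (hmarg : ∀ τ, ∑ ν, π ν * lam ν τ = πt τ)
    (hlik : ∀ ν x y, 0 ≤ lik q k ν x y)
    (ν τ : Θ) (x : Fin T → 𝒳) (y : Fin T → 𝒴) (hw : 0 < π ν * lam ν τ * lik q k ν x y)
    (hac : ∀ t : Fin T, ∀ b, k t τ (hist t x y) b = 0 → k t ν (hist t x y) b = 0) :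
    0 < π ν ∧ 0 < lam ν τ ∧ 0 < lik q k ν x y ∧ 0 < πt τ ∧
      (∀ t, 0 < k t τ (hist t x y) (y t)) ∧
      (∀ n, 0 < plik k n τ x y) ∧ (∀ n, 0 < ∑ τ', πt τ' * plik k n τ' x y) := by
  have hpl : 0 < π ν * lam ν τ := pos_of_mul_pos_left hw (hlik ν x y)
  have hl : 0 < lik q k ν x y := pos_of_mul_pos_right hw hpl.le
  have hp : 0 < π ν := pos_of_mul_pos_left hpl (hlam ν τ)
  have hla : 0 < lam ν τ := pos_of_mul_pos_right hpl (hπ ν)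
  have ht : 0 < πt τ := by
    rw [← hmarg τ]
    exact lt_of_lt_of_le hpl (Finset.single_le_sum
      (f := fun ν => π ν * lam ν τ) (fun i _ => mul_nonneg (hπ i) (hlam i τ)) (Finset.mem_univ ν))
  have hkτ : ∀ t, 0 < k t τ (hist t x y) (y t) := by
    intro t
    refine lt_of_le_of_ne (hk _ _ _ _) fun h => ?_
    have h0 := hac t (y t) h.symm
    apply hl.ne'
    unfold lik
    exact Finset.prod_eq_zero (Finset.mem_univ t) (by rw [h0, mul_zero])
  have hpn : ∀ n, 0 < plik k n τ x y := by
    intro n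
    unfold plik
    refine Finset.prod_pos fun s _ => ?_
    split_ifs
    · exact hkτ s
    · exact one_pos
  refine ⟨hp, hla, hl, ht, hkτ, hpn, fun n => ?_⟩
  exact lt_of_lt_of_le (mul_pos ht (hpn n)) (Finset.single_le_sum
      (f := fun τ' => πt τ' * plik k n τ' x y)
      (fun i _ => mul_nonneg (hπt i) (plik_nonneg k hk n i x y)) (Finset.mem_univ τ))


/-- misspecified learner error bound. -/
theorem statement4 (hT : 1 ≤ T)
    (q : ∀ t : Fin T, ((Fin (t : ℕ) → 𝒳) × (Fin (t : ℕ) → 𝒴)) → 𝒳 → ℝ)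
    (k : ∀ t : Fin T, Θ → ((Fin ((t : ℕ) + 1) → 𝒳) × (Fin (t : ℕ) → 𝒴)) → 𝒴 → ℝ)
    (hq : ∀ t h, (∀ a, 0 ≤ q t h a) ∧ ∑ a, q t h a = 1)
    (hk : ∀ t ν h, (∀ b, 0 ≤ k t ν h b) ∧ ∑ b, k t ν h b = 1)
    (π πt : Θ → ℝ)
    (hπ : (∀ ν, 0 ≤ π ν) ∧ ∑ ν, π ν = 1)
    (hπt : (∀ ν, 0 ≤ πt ν) ∧ ∑ ν, πt ν = 1)
    (lam : Θ → Θ → ℝ)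
    (hlam : ∀ ν, (∀ τ, 0 ≤ lam ν τ) ∧ ∑ τ, lam ν τ = 1)
    (hmarg : ∀ τ, ∑ ν, π ν * lam ν τ = πt τ) :
    (T : ℝ≥0∞)⁻¹ * ∑ t : Fin T, ∑ ν : Θ, ∑ τ : Θ, ∑ x : Fin T → 𝒳, ∑ y : Fin T → 𝒴,
        ENNReal.ofReal (π ν * lam ν τ * lik q k ν x y) *
          klDivF (k t ν (hist t x y)) (predictive k πt t x y)
      ≤ ENNReal.ofReal (mutualInfo
            (fun ω : Θ × Θ × (Fin T → 𝒳) × (Fin T → 𝒴) =>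
              π ω.1 * lam ω.1 ω.2.1 * lik q k ω.1 ω.2.2.1 ω.2.2.2)
            (fun ω => ω.1) (fun ω => ω.2.1)) / (T : ℝ≥0∞)
        + (T : ℝ≥0∞)⁻¹ * ∑ t : Fin T, ∑ ν : Θ, ∑ τ : Θ, ∑ x : Fin T → 𝒳, ∑ y : Fin T → 𝒴,
            ENNReal.ofReal (π ν * lam ν τ * lik q k ν x y) *
              klDivF (k t ν (hist t x y)) (k t τ (hist t x y)) := by
  obtain ⟨ν₀⟩ : Nonempty Θ := by
    by_contra h
    rw [not_nonempty_iff] at h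
    simpa using hπ.2
  have hX : Nonempty 𝒳 := by
    by_contra h
    rw [not_nonempty_iff] at h
    simpa using (hq ⟨0, hT⟩ (fun i => i.elim0, fun i => i.elim0)).2
  have hY : Nonempty 𝒴 := by
    by_contra h
    rw [not_nonempty_iff] at h
    simpa using (hk ⟨0, hT⟩ ν₀ (fun _ => hX.some, fun i => i.elim0)).2
  have hq1 : ∀ t h, ∑ a, q t h a = 1 := fun t h => (hq t h).2
  have hk1 : ∀ t ν h, ∑ b, k t ν h b = 1 := fun t ν h => (hk t ν h).2
  have hk0 : ∀ t ν h b, 0 ≤ k t ν h b := fun t ν h => (hk t ν h).1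
  have hlam0 : ∀ ν τ, 0 ≤ lam ν τ := fun ν => (hlam ν).1
  have hlik0 : ∀ ν x y, 0 ≤ lik q k ν x y := fun ν x y =>
    Finset.prod_nonneg fun t _ => mul_nonneg ((hq t _).1 _) (hk0 _ _ _ _)
  have hliks : ∀ ν, ∑ x, ∑ y, lik q k ν x y = 1 := lik_sum_one q k hq1 hk1
  have hw0 : ∀ ν τ x y, 0 ≤ π ν * lam ν τ * lik q k ν x y := fun ν τ x y =>
    mul_nonneg (mul_nonneg (hπ.1 ν) (hlam0 ν τ)) (hlik0 ν x y)
  rw [mutualInfo_eq π πt lam hlam hmarg (lik q k) hliks, ENNReal.div_eq_inv_mul, ← mul_add]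
  refine mul_le_mul_right ?_ _
  by_cases hac : ∀ (t : Fin T) ν τ x y, 0 < π ν * lam ν τ * lik q k ν x y →
      ∀ b, k t τ (hist t x y) b = 0 → k t ν (hist t x y) b = 0
  swap
  · push Not at hac
    obtain ⟨t, ν, τ, x, y, hw, b, hb, hb'⟩ := hac
    have htop : ENNReal.ofReal (π ν * lam ν τ * lik q k ν x y) *
        klDivF (k t ν (hist t x y)) (k t τ (hist t x y)) = ⊤ := by
      have : klDivF (k t ν (hist t x y)) (k t τ (hist t x y)) = ⊤ := by
        unfold klDivF
        rw [if_neg]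
        intro h
        exact hb' (h b hb)
      rw [this]
      exact ENNReal.mul_top (by simpa using hw)
    rw [sum5_le_top (fun (t : Fin T) ν τ x y => ENNReal.ofReal (π ν * lam ν τ * lik q k ν x y) *
        klDivF (k t ν (hist t x y)) (k t τ (hist t x y))) t ν τ x y htop]
    simp
  have facts := fun ν τ x y (hw : 0 < π ν * lam ν τ * lik q k ν x y) =>
    support_facts q k hk0 π πt hπ.1 hπt.1 lam hlam0 hmarg hlik0 ν τ x y hw
      (fun t => hac t ν τ x y hw)
  -- facts on the predictive
  have hnum : ∀ (t : Fin T) x y b, 0 ≤ ∑ ν, πt ν * plik k t ν x y * k t ν (hist t x y) b :=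
    fun t x y b => Finset.sum_nonneg fun ν _ =>
      mul_nonneg (mul_nonneg (hπt.1 ν) (plik_nonneg k hk0 t ν x y)) (hk0 _ _ _ _)
  have hpred0 : ∀ t x y b, 0 ≤ predictive k πt t x y b := by
    intro t x y b
    rw [predictive_eq]
    exact div_nonneg (hnum t x y b) (Finset.sum_nonneg fun ν _ =>
      mul_nonneg (hπt.1 ν) (plik_nonneg k hk0 t ν x y))
  have hpred1 : ∀ t ν τ x y, 0 < π ν * lam ν τ * lik q k ν x y →
      ∑ b, predictive k πt t x y b = 1 := by
    intro t ν τ x y hw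
    obtain ⟨_, _, _, _, _, _, hM⟩ := facts ν τ x y hw
    simp only [predictive_eq]
    rw [← Finset.sum_div, Finset.sum_comm]
    simp only [← Finset.mul_sum, hk1, mul_one]
    exact div_self (hM t).ne'
  have hpredpos : ∀ t ν τ x y, 0 < π ν * lam ν τ * lik q k ν x y →
      ∀ b, k t τ (hist t x y) b ≠ 0 → 0 < predictive k πt t x y b := by
    intro t ν τ x y hw b hb
    obtain ⟨_, _, _, ht, _, hpn, hM⟩ := facts ν τ x y hw
    rw [predictive_eq]
    refine div_pos ?_ (hM t)
    have hpos : 0 < πt τ * plik k t τ x y * k t τ (hist t x y) b :=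
      mul_pos (mul_pos ht (hpn t)) (lt_of_le_of_ne (hk0 _ _ _ _) hb.symm)
    exact lt_of_lt_of_le hpos (Finset.single_le_sum
      (f := fun ν => πt ν * plik k t ν x y * k t ν (hist t x y) b)
      (fun ν _ => mul_nonneg (mul_nonneg (hπt.1 ν) (plik_nonneg k hk0 t ν x y)) (hk0 _ _ _ _))
      (Finset.mem_univ τ))
  have hpredac : ∀ t ν τ x y, 0 < π ν * lam ν τ * lik q k ν x y →
      ∀ b, predictive k πt t x y b = 0 → k t ν (hist t x y) b = 0 := by
    intro t ν τ x y hw b hb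
    by_contra hne
    exact (hpredpos t ν τ x y hw b (fun h => hne (hac t ν τ x y hw b h))).ne' hb
  -- conversion to real sums
  have conv : ∀ (w : ℝ) (p r : 𝒴 → ℝ), 0 ≤ w → (0 < w → ∀ b, r b = 0 → p b = 0) →
      ENNReal.ofReal w * klDivF p r = ENNReal.ofReal (w * ∑ b, p b * Real.log (p b / r b)) := by
    intro w p r hw h
    rcases hw.eq_or_lt with h0 | h0
    · simp [← h0]
    · unfold klDivF
      rw [if_pos (h h0), ENNReal.ofReal_mul hw]
  have hA : ∀ t ν τ x y, ENNReal.ofReal (π ν * lam ν τ * lik q k ν x y) *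
          klDivF (k t ν (hist t x y)) (predictive k πt t x y) =
      ENNReal.ofReal (π ν * lam ν τ * lik q k ν x y *
        ∑ b, k t ν (hist t x y) b * Real.log (k t ν (hist t x y) b / predictive k πt t x y b)) :=
    fun t ν τ x y => conv _ _ _ (hw0 ν τ x y) (hpredac t ν τ x y)
  have hB : ∀ t ν τ x y, ENNReal.ofReal (π ν * lam ν τ * lik q k ν x y) *
          klDivF (k t ν (hist t x y)) (k t τ (hist t x y)) =
      ENNReal.ofReal (π ν * lam ν τ * lik q k ν x y *
        ∑ b, k t ν (hist t x y) b * Real.log (k t ν (hist t x y) b / k t τ (hist t x y) b)) :=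
    fun t ν τ x y => conv _ _ _ (hw0 ν τ x y) (hac t ν τ x y)
  have hA0 : ∀ t ν τ x y, 0 ≤ π ν * lam ν τ * lik q k ν x y *
        ∑ b, k t ν (hist t x y) b *
          Real.log (k t ν (hist t x y) b / predictive k πt t x y b) := by
    intro t ν τ x y
    rcases (hw0 ν τ x y).eq_or_lt with h0 | h0
    · rw [← h0, zero_mul]
    · exact mul_nonneg h0.le (gibbs _ _ (hk0 _ _ _) (hpred0 t x y) (hk1 _ _ _)
        (hpred1 t ν τ x y h0) (hpredac t ν τ x y h0))
  have hB0 : ∀ t ν τ x y, 0 ≤ π ν * lam ν τ * lik q k ν x y *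
        ∑ b, k t ν (hist t x y) b *
          Real.log (k t ν (hist t x y) b / k t τ (hist t x y) b) := by
    intro t ν τ x y
    rcases (hw0 ν τ x y).eq_or_lt with h0 | h0
    · rw [← h0, zero_mul]
    · exact mul_nonneg h0.le (gibbs _ _ (hk0 _ _ _) (hk0 _ _ _) (hk1 _ _ _)
        (hk1 _ _ _) (hac t ν τ x y h0))
  simp only [hA, hB]
  rw [ofReal_sum5 _ hA0, ofReal_sum5 _ hB0]
  refine le_trans (ENNReal.ofReal_le_ofReal ?_) ENNReal.ofReal_add_le
  -- the real inequality
  have step1 : ∀ t ν τ x y, π ν * lam ν τ * lik q k ν x y *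
        ∑ b, k t ν (hist t x y) b * Real.log (k t ν (hist t x y) b / predictive k πt t x y b)
      = π ν * lam ν τ * (lik q k ν x y * ∑ b, k t ν (hist t x y) b *
          (Real.log (k t τ (hist t x y) b) - Real.log (predictive k πt t x y b)))
        + π ν * lam ν τ * lik q k ν x y *
          ∑ b, k t ν (hist t x y) b *
            Real.log (k t ν (hist t x y) b / k t τ (hist t x y) b) := by
    intro t ν τ x y
    rw [← mul_assoc]
    rcases (hw0 ν τ x y).eq_or_lt with h0 | h0
    · rw [← h0]; ring
    · rw [← mul_add, ← Finset.sum_add_distrib]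
      congr 1
      refine Finset.sum_congr rfl fun b _ => ?_
      by_cases hb : k t ν (hist t x y) b = 0
      · simp [hb]
      · have hbτ : k t τ (hist t x y) b ≠ 0 := fun h => hb (hac t ν τ x y h0 b h)
        rw [Real.log_div hb (hpredpos t ν τ x y h0 b hbτ).ne', Real.log_div hb hbτ]
        ring
  simp only [step1, Finset.sum_add_distrib]
  refine add_le_add_left ?_ _
  have step2 : ∀ (t : Fin T) ν τ, ∑ x, ∑ y, π ν * lam ν τ *
        (lik q k ν x y * ∑ b, k t ν (hist t x y) b *
          (Real.log (k t τ (hist t x y) b) - Real.log (predictive k πt t x y b)))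
      = ∑ x, ∑ y, π ν * lam ν τ * (lik q k ν x y *
          (Real.log (k t τ (hist t x y) (y t)) - Real.log (predictive k πt t x y (y t)))) := by
    intro t ν τ
    simp only [← Finset.mul_sum]
    congr 1
    refine lik_tower q k hq1 hk1 t ν (fun x y b =>
      Real.log (k t τ (hist t x y) b) - Real.log (predictive k πt t x y b)) ?_ ?_
    · intro s x y a hs
      simp only [hist_update_x t s hs, predictive_update_x k πt t s hs]
    · intro s x y b hs
      simp only [hist_update_y t s hs, predictive_update_y k πt t s hs]
  simp only [step2]
  rw [sum5_rotate]
  have step3 : ∀ ν τ x y, ∑ t : Fin T, π ν * lam ν τ * (lik q k ν x y *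
          (Real.log (k t τ (hist t x y) (y t)) - Real.log (predictive k πt t x y (y t))))
      ≤ π ν * lik q k ν x y * (πt τ * plik k T τ x y / ∑ τ', πt τ' * plik k T τ' x y)
        - π ν * lam ν τ * lik q k ν x y
        + π ν * lam ν τ * lik q k ν x y *
          (Real.log (π ν * lam ν τ) - Real.log (π ν) - Real.log (πt τ)) := by
    intro ν τ x y
    simp only [← Finset.mul_sum]
    rw [← mul_assoc]
    rcases (hw0 ν τ x y).eq_or_lt with h0 | h0
    · rw [← h0, zero_mul, zero_mul, sub_zero, add_zero]
      exact mul_nonneg (mul_nonneg (hπ.1 ν) (hlik0 ν x y)) (div_nonneg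
        (mul_nonneg (hπt.1 τ) (plik_nonneg k hk0 T τ x y))
        (Finset.sum_nonneg fun i _ => mul_nonneg (hπt.1 i) (plik_nonneg k hk0 T i x y)))
    · obtain ⟨hp, hla, hl, ht, hkτ, hpn, hM⟩ := facts ν τ x y h0
      set M : ℕ → ℝ := fun n => ∑ τ', πt τ' * plik k n τ' x y with hMdef
      have htel : ∀ t : Fin T,
          Real.log (k t τ (hist t x y) (y t)) - Real.log (predictive k πt t x y (y t))
          = (fun n : ℕ => (Real.log (plik k (n + 1) τ x y) - Real.log (M (n + 1)))
              - (Real.log (plik k n τ x y) - Real.log (M n))) (t : ℕ) := by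
        intro t
        have e : predictive k πt t x y (y t) = M (t + 1) / M t := by
          rw [predictive_eq]
          simp only [hMdef, plik_succ, mul_assoc]
        have hM' : ∀ n, M n ≠ 0 := fun n => (hM n).ne'
        rw [e, Real.log_div (hM' _) (hM' _)]
        simp only
        rw [plik_succ, Real.log_mul (hpn _).ne' (hkτ t).ne']
        ring
      rw [Finset.sum_congr rfl fun t _ => htel t, Fin.sum_univ_eq_sum_range
          (fun n : ℕ => (Real.log (plik k (n + 1) τ x y) - Real.log (M (n + 1)))
              - (Real.log (plik k n τ x y) - Real.log (M n))) T,
        Finset.sum_range_sub (fun n : ℕ => Real.log (plik k n τ x y) - Real.log (M n))]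
      have hp0 : plik k 0 τ x y = 1 := by simp [plik]
      have hM0 : M 0 = 1 := by
        simp only [hMdef]
        simpa [plik] using hπt.2
      rw [hp0, hM0, Real.log_one, sub_zero, sub_zero]
      have hMT : 0 < M T := hM T
      have hz : 0 < πt τ * plik k T τ x y / (M T * lam ν τ) :=
        div_pos (mul_pos ht (hpn T)) (mul_pos hMT hla)
      have hlog := Real.log_le_sub_one_of_pos hz
      rw [Real.log_div (mul_pos ht (hpn T)).ne' (mul_pos hMT hla).ne',
        Real.log_mul ht.ne' (hpn T).ne', Real.log_mul hMT.ne' hla.ne'] at hlog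
      rw [Real.log_mul hp.ne' hla.ne']
      have hm := mul_le_mul_of_nonneg_left hlog h0.le
      have e2 : π ν * lam ν τ * lik q k ν x y * (πt τ * plik k T τ x y / (M T * lam ν τ) - 1)
          = π ν * lik q k ν x y * (πt τ * plik k T τ x y / M T)
            - π ν * lam ν τ * lik q k ν x y := by
        field_simp
      rw [e2] at hm
      change _ ≤ π ν * lik q k ν x y * (πt τ * plik k T τ x y / M T) - _ + _
      linarith
  refine le_trans (Finset.sum_le_sum fun ν _ => Finset.sum_le_sum fun τ _ =>
    Finset.sum_le_sum fun x _ => Finset.sum_le_sum fun y _ => step3 ν τ x y) ?_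
  simp only [Finset.sum_add_distrib, Finset.sum_sub_distrib]
  have s1 : ∑ ν, ∑ τ, ∑ x, ∑ y, π ν * lam ν τ * lik q k ν x y = 1 := by
    simp only [← Finset.mul_sum, hliks, mul_one]
    simp only [(hlam _).2, mul_one]
    exact hπ.2
  have s2 : ∑ ν, ∑ τ, ∑ x, ∑ y, π ν * lam ν τ * lik q k ν x y *
          (Real.log (π ν * lam ν τ) - Real.log (π ν) - Real.log (πt τ))
      = ∑ ν, ∑ τ, π ν * lam ν τ *
          (Real.log (π ν * lam ν τ) - Real.log (π ν) - Real.log (πt τ)) := by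
    refine Finset.sum_congr rfl fun ν _ => Finset.sum_congr rfl fun τ _ => ?_
    simp only [← Finset.sum_mul, ← Finset.mul_sum, hliks, mul_one]
  have s3 : ∑ ν, ∑ τ, ∑ x, ∑ y, π ν * lik q k ν x y *
      (πt τ * plik k T τ x y / ∑ τ', πt τ' * plik k T τ' x y) ≤ 1 := by
    calc ∑ ν, ∑ τ, ∑ x, ∑ y, π ν * lik q k ν x y *
          (πt τ * plik k T τ x y / ∑ τ', πt τ' * plik k T τ' x y)
        = ∑ ν, ∑ x, ∑ y, π ν * lik q k ν x y *
          ∑ τ, (πt τ * plik k T τ x y / ∑ τ', πt τ' * plik k T τ' x y) := by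
          refine Finset.sum_congr rfl fun ν _ => ?_
          rw [Finset.sum_comm]
          refine Finset.sum_congr rfl fun x _ => ?_
          rw [Finset.sum_comm]
          refine Finset.sum_congr rfl fun y _ => ?_
          rw [Finset.mul_sum]
      _ ≤ ∑ ν, ∑ x, ∑ y, π ν * lik q k ν x y := by
          refine Finset.sum_le_sum fun ν _ => Finset.sum_le_sum fun x _ =>
            Finset.sum_le_sum fun y _ => ?_
          refine mul_le_of_le_one_right (mul_nonneg (hπ.1 ν) (hlik0 ν x y)) ?_
          rw [← Finset.sum_div]
          exact div_self_le_one _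
      _ = 1 := by
          simp only [← Finset.mul_sum, hliks, mul_one]
          exact hπ.2
  rw [s1, s2]
  linarith

end
end

section
/- Let Θ, 𝒳, 𝒴 be finite sets, π a pmf on Θ, μ a pmf on 𝒳, and k(· | ν, x) a pmf on 𝒴 for every ν ∈ Θ and x ∈ 𝒳. Let n ≥ 1 and suppose the random variables θ, X_0, Y_1, X_1, Y_2, …, X_n, Y_{n+1} have joint pmf P(θ = ν, X_0 = x_0, Y_1 = y_1, …, X_n = x_n, Y_{n+1} = y_{n+1}) = π(ν) · ∏_{s=0}^{n} μ(x_s) · k(y_{s+1} | ν, x_s) (i.e., the pairs (X_s, Y_{s+1}) are i.i.d. conditioned on θ, with inputs independent of θ). Then for every 0 ≤ t ≤ n−1, I( Y_{t+2} ; θ | X_{0:t+1}, Y_{1:t+1} ) ≤ I( Y_{t+1} ; θ | X_{0:t}, Y_{1:t} ): the per-timestep estimation error of the optimal predictor is monotonically non-increasing. -/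
/-!
Statement 7 (monotonicity of per-timestep estimation error): if the pairs `(X_s, Y_{s+1})` are
i.i.d. conditioned on `θ` (with inputs independent of `θ`), then
`I(Y_{t+2}; θ | X_{0:t+1}, Y_{1:t+1}) ≤ I(Y_{t+1}; θ | X_{0:t}, Y_{1:t})` for all `0 ≤ t ≤ n−1`.
Here `Y i` (for `i : Fin (n+1)`) denotes the label `Y_{i+1}`.
-/

open scoped Classical

noncomputable section

/-- Conditional mutual information `I(X;Y|Z) = H(X,Z) + H(Y,Z) - H(X,Y,Z) - H(Z)` (in nats). -/
def condMutualInfo {Ω : Type*} [Fintype Ω] (p : Ω → ℝ) {A B C : Type*}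
    [Fintype A] [Fintype B] [Fintype C] (X : Ω → A) (Y : Ω → B) (Z : Ω → C) : ℝ :=
  entropy p (fun ω => (X ω, Z ω)) + entropy p (fun ω => (Y ω, Z ω))
    - entropy p (fun ω => ((X ω, Y ω), Z ω)) - entropy p Z

section helpers

variable {Ω : Type*} [Fintype Ω] {p : Ω → ℝ}

lemma pr_nonneg (hp0 : ∀ ω, 0 ≤ p ω) {A : Type*} (X : Ω → A) (a : A) : 0 ≤ pr p X a := by
  unfold pr
  refine Finset.sum_nonneg fun ω _ => ?_
  split_ifs
  · exact hp0 ω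
  · exact le_rfl

lemma le_pr (hp0 : ∀ ω, 0 ≤ p ω) {A : Type*} (X : Ω → A) (ω : Ω) : p ω ≤ pr p X (X ω) := by
  unfold pr
  have := Finset.single_le_sum (f := fun ω' => if X ω' = X ω then p ω' else 0)
    (fun ω' _ => by
      show 0 ≤ if X ω' = X ω then p ω' else 0
      split_ifs
      · exact hp0 ω'
      · exact le_rfl) (Finset.mem_univ ω)
  simpa using this

/-- Law of the unconscious statistician. -/
lemma sum_comp_eq {A : Type*} [Fintype A] (X : Ω → A) (g : A → ℝ) :
    ∑ ω, p ω * g (X ω) = ∑ a, pr p X a * g a := by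
  unfold pr
  simp_rw [Finset.sum_mul]
  rw [Finset.sum_comm]
  refine Finset.sum_congr rfl fun ω _ => ?_
  simp [ite_mul]

lemma pr_comp {A B : Type*} [Fintype A] (X : Ω → A) (f : A → B) (b : B) :
    pr p (fun ω => f (X ω)) b = ∑ a, pr p X a * (if f a = b then 1 else 0) := by
  rw [← sum_comp_eq X (fun a => if f a = b then (1 : ℝ) else 0)]
  unfold pr
  refine Finset.sum_congr rfl fun ω _ => ?_
  simp

lemma sum_pr {A : Type*} [Fintype A] (X : Ω → A) : ∑ a, pr p X a = ∑ ω, p ω := by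
  have := sum_comp_eq (p := p) X (fun _ => 1)
  simpa using this.symm

lemma sum_pr_pair {A B : Type*} [Fintype A] (X : Ω → A) (Z : Ω → B) (z : B) :
    ∑ a, pr p (fun ω => (X ω, Z ω)) (a, z) = pr p Z z := by
  unfold pr
  rw [Finset.sum_comm]
  refine Finset.sum_congr rfl fun ω _ => ?_
  by_cases h : Z ω = z <;> simp [Prod.ext_iff, h]

lemma pr_congr {A B : Type*} {X : Ω → A} {Z : Ω → B} {a : A} {b : B}
    (h : ∀ ω, X ω = a ↔ Z ω = b) : pr p X a = pr p Z b := by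
  unfold pr
  simp_rw [h]

lemma entropy_eq {A : Type*} [Fintype A] (X : Ω → A) :
    entropy p X = ∑ ω, p ω * (- Real.log (pr p X (X ω))) := by
  rw [sum_comp_eq X (fun a => - Real.log (pr p X a))]
  unfold entropy
  refine Finset.sum_congr rfl fun a _ => ?_
  rw [Real.negMulLog]; ring

lemma entropy_congr {A B : Type*} [Fintype A] [Fintype B] {X : Ω → A} {Z : Ω → B}
    (h : ∀ ω ω', X ω = X ω' ↔ Z ω = Z ω') : entropy p X = entropy p Z := by
  rw [entropy_eq, entropy_eq]
  refine Finset.sum_congr rfl fun ω _ => ?_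
  rw [pr_congr (p := p) (fun ω' => h ω' ω)]

lemma entropy_map_congr {A B : Type*} [Fintype A] [Fintype B] {V V' : Ω → A}
    (h : ∀ a, pr p V a = pr p V' a) (f : A → B) :
    entropy p (fun ω => f (V ω)) = entropy p (fun ω => f (V' ω)) := by
  unfold entropy
  refine Finset.sum_congr rfl fun b _ => ?_
  rw [pr_comp V, pr_comp V']
  simp_rw [h]

/-- Strong subadditivity. -/
lemma strong_subadd (hp0 : ∀ ω, 0 ≤ p ω) (hp1 : ∑ ω, p ω = 1) {A B C : Type*}
    [Fintype A] [Fintype B] [Fintype C] (X : Ω → A) (Y : Ω → B) (Z : Ω → C) :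
    entropy p (fun ω => ((X ω, Y ω), Z ω)) + entropy p Z
      ≤ entropy p (fun ω => (X ω, Z ω)) + entropy p (fun ω => (Y ω, Z ω)) := by
  set a := fun v : (A × B) × C => pr p (fun ω => ((X ω, Y ω), Z ω)) v with ha
  set b := fun c : C => pr p Z c with hb
  set c := fun v : A × C => pr p (fun ω => (X ω, Z ω)) v with hc
  set d := fun v : B × C => pr p (fun ω => (Y ω, Z ω)) v with hd
  have a0 : ∀ v, 0 ≤ a v := fun v => pr_nonneg hp0 _ v
  have b0 : ∀ v, 0 ≤ b v := fun v => pr_nonneg hp0 _ v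
  have c0 : ∀ v, 0 ≤ c v := fun v => pr_nonneg hp0 _ v
  have d0 : ∀ v, 0 ≤ d v := fun v => pr_nonneg hp0 _ v
  have key : ∑ ω, p ω * (c (X ω, Z ω) * d (Y ω, Z ω) / (a ((X ω, Y ω), Z ω) * b (Z ω))) ≤ 1 := by
    rw [sum_comp_eq (fun ω => ((X ω, Y ω), Z ω))
      (fun v => c (v.1.1, v.2) * d (v.1.2, v.2) / (a v * b v.2))]
    calc _ ≤ ∑ v : (A × B) × C, c (v.1.1, v.2) * d (v.1.2, v.2) / b v.2 := by
          refine Finset.sum_le_sum fun v _ => ?_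
          change a v * _ ≤ _
          by_cases h : a v = 0
          · rw [h, zero_mul]
            exact div_nonneg (mul_nonneg (c0 _) (d0 _)) (b0 _)
          · apply le_of_eq
            by_cases h2 : b v.2 = 0
            · simp [h2]
            · field_simp
      _ = ∑ z, b z := by
          rw [Fintype.sum_prod_type_right]
          refine Finset.sum_congr rfl fun z _ => ?_
          rw [Fintype.sum_prod_type]
          simp only
          simp_rw [← Finset.sum_div, ← Finset.mul_sum, ← Finset.sum_mul]
          have h1 : ∑ i, c (i, z) = b z := sum_pr_pair X Z z
          have h2 : ∑ i, d (i, z) = b z := sum_pr_pair Y Z z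
          rw [h1, h2]
          by_cases h : b z = 0
          · simp [h]
          · field_simp
      _ = 1 := by rw [← hp1]; exact sum_pr Z
      _ ≤ 1 := le_rfl
  rw [entropy_eq, entropy_eq, entropy_eq, entropy_eq, ← Finset.sum_add_distrib,
    ← Finset.sum_add_distrib]
  suffices h : ∀ ω, p ω * (-Real.log (a ((X ω, Y ω), Z ω))) + p ω * (-Real.log (b (Z ω)))
      ≤ p ω * (-Real.log (c (X ω, Z ω))) + p ω * (-Real.log (d (Y ω, Z ω)))
        + (p ω * (c (X ω, Z ω) * d (Y ω, Z ω) / (a ((X ω, Y ω), Z ω) * b (Z ω))) - p ω) by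
    have h2 := Finset.sum_le_sum (s := Finset.univ) fun ω _ => h ω
    rw [Finset.sum_add_distrib (f := fun ω => _ + _), Finset.sum_sub_distrib, hp1] at h2
    linarith
  intro ω
  rcases (hp0 ω).eq_or_lt with h0 | h0
  · simp [← h0]
  · have pa : 0 < a ((X ω, Y ω), Z ω) := h0.trans_le (le_pr hp0 (fun ω => ((X ω, Y ω), Z ω)) ω)
    have pb : 0 < b (Z ω) := h0.trans_le (le_pr hp0 Z ω)
    have pc : 0 < c (X ω, Z ω) := h0.trans_le (le_pr hp0 (fun ω => (X ω, Z ω)) ω)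
    have pd : 0 < d (Y ω, Z ω) := h0.trans_le (le_pr hp0 (fun ω => (Y ω, Z ω)) ω)
    have hl := Real.log_le_sub_one_of_pos (div_pos (mul_pos pc pd) (mul_pos pa pb))
    rw [Real.log_div (mul_pos pc pd).ne' (mul_pos pa pb).ne', Real.log_mul pc.ne' pd.ne',
      Real.log_mul pa.ne' pb.ne'] at hl
    have := mul_le_mul_of_nonneg_left hl h0.le
    linarith

variable {Θ 𝒳 𝒴 : Type*} [Fintype Θ] [Fintype 𝒳] [Fintype 𝒴]

/-- Marginals of a conditionally i.i.d. family. -/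
lemma marginal {N : ℕ} {π : Θ → ℝ} {μ : 𝒳 → ℝ} (hμ : ∑ a, μ a = 1)
    {k : 𝒴 → Θ → 𝒳 → ℝ} (hk : ∀ ν a, ∑ b, k b ν a = 1)
    {θ : Ω → Θ} {X : Fin N → Ω → 𝒳} {Y : Fin N → Ω → 𝒴}
    (hjoint : ∀ (ν : Θ) (x : Fin N → 𝒳) (y : Fin N → 𝒴),
      pr p (fun ω => (θ ω, fun s => X s ω, fun s => Y s ω)) (ν, x, y)
        = π ν * ∏ s : Fin N, μ (x s) * k (y s) ν (x s))
    {ι : Type} [Fintype ι] (s : ι → Fin N) (hs : Function.Injective s)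
    (ν : Θ) (z : ι → 𝒳 × 𝒴) :
    pr p (fun ω => (θ ω, fun i => (X (s i) ω, Y (s i) ω))) (ν, z)
      = π ν * ∏ i, μ (z i).1 * k (z i).2 ν (z i).1 := by
  have hfull : ∀ (ν' : Θ) (w : Fin N → 𝒳 × 𝒴),
      pr p (fun ω => (θ ω, fun i => (X i ω, Y i ω))) (ν', w)
        = π ν' * ∏ i, μ (w i).1 * k (w i).2 ν' (w i).1 := by
    intro ν' w
    rw [← hjoint ν' (fun i => (w i).1) (fun i => (w i).2)]
    apply pr_congr
    intro ω
    simp only [Prod.ext_iff, funext_iff]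
    grind
  have hq : ∑ v : 𝒳 × 𝒴, μ v.1 * k v.2 ν v.1 = 1 := by
    rw [Fintype.sum_prod_type]
    simp only
    simp_rw [← Finset.mul_sum, hk, mul_one, hμ]
  rw [pr_comp (fun ω => (θ ω, fun i => (X i ω, Y i ω)))
    (fun v : Θ × (Fin N → 𝒳 × 𝒴) => (v.1, fun i => v.2 (s i))), Fintype.sum_prod_type]
  rw [Finset.sum_eq_single ν (by
    intro ν' _ hne
    refine Finset.sum_eq_zero fun w _ => ?_
    simp [Prod.ext_iff, hne]) (by simp)]
  have hterm : ∀ w : Fin N → 𝒳 × 𝒴,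
      pr p (fun ω => (θ ω, fun i => (X i ω, Y i ω))) (ν, w) *
        (if (ν, fun i => w (s i)) = (ν, z) then (1 : ℝ) else 0)
      = π ν * ∏ i, (if ∀ j, s j = i → w i = z j then μ (w i).1 * k (w i).2 ν (w i).1 else 0) := by
    intro w
    rw [hfull, mul_assoc]
    congr 1
    by_cases h : (fun i => w (s i)) = z
    · have h' : ∀ i, ∀ j, s j = i → w i = z j := by
        rintro _ j rfl
        rw [← h]
      rw [if_pos (by rw [h]), mul_one]
      exact Finset.prod_congr rfl fun i _ => (if_pos (h' i)).symm
    · rw [if_neg (by simpa using h), mul_zero]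
      obtain ⟨j, hj⟩ := Function.ne_iff.mp h
      refine (Finset.prod_eq_zero (Finset.mem_univ (s j)) (if_neg ?_)).symm
      intro hh
      exact hj (hh j rfl)
  refine (Finset.sum_congr rfl fun w _ => Eq.trans (by congr) (hterm w)).trans ?_
  rw [← Finset.mul_sum]
  congr 1
  have := Finset.prod_univ_sum (fun _ : Fin N => (Finset.univ : Finset (𝒳 × 𝒴)))
    (fun i v => if ∀ j, s j = i → v = z j then μ v.1 * k v.2 ν v.1 else 0)
  rw [Fintype.piFinset_univ] at this
  rw [← this]
  have h1 : ∀ i, i ∉ Finset.univ.image s →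
      (∑ v : 𝒳 × 𝒴, if ∀ j, s j = i → v = z j then μ v.1 * k v.2 ν v.1 else 0) = 1 := by
    intro i hi
    rw [← hq]
    refine Finset.sum_congr rfl fun v _ => if_pos ?_
    rintro j rfl
    exact absurd (Finset.mem_image_of_mem s (Finset.mem_univ j)) hi
  rw [← Finset.prod_subset (Finset.subset_univ (Finset.univ.image s)) fun i _ hi => h1 i hi,
    Finset.prod_image (fun a _ b _ h => hs h)]
  refine Finset.prod_congr rfl fun j _ => ?_
  rw [Finset.sum_eq_single (z j)]
  · rw [if_pos]
    intro j' hj'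
    rw [hs hj']
  · intro v _ hv
    rw [if_neg]
    intro h
    exact hv (h j rfl)
  · simp

/-- Exchangeability. -/
lemma marginal' {N : ℕ} {π : Θ → ℝ} {μ : 𝒳 → ℝ} (hμ : ∑ a, μ a = 1)
    {k : 𝒴 → Θ → 𝒳 → ℝ} (hk : ∀ ν a, ∑ b, k b ν a = 1)
    {θ : Ω → Θ} {X : Fin N → Ω → 𝒳} {Y : Fin N → Ω → 𝒴}
    (hjoint : ∀ (ν : Θ) (x : Fin N → 𝒳) (y : Fin N → 𝒴),
      pr p (fun ω => (θ ω, fun s => X s ω, fun s => Y s ω)) (ν, x, y)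
        = π ν * ∏ s : Fin N, μ (x s) * k (y s) ν (x s))
    {ι : Type} [Fintype ι] (s s' : ι → Fin N) (hs : Function.Injective s)
    (hs' : Function.Injective s') (z : ι → 𝒳 × 𝒴) :
    pr p (fun ω i => (X (s i) ω, Y (s i) ω)) z = pr p (fun ω i => (X (s' i) ω, Y (s' i) ω)) z := by
  rw [← sum_pr_pair θ (fun ω i => (X (s i) ω, Y (s i) ω)),
    ← sum_pr_pair θ (fun ω i => (X (s' i) ω, Y (s' i) ω))]
  refine Finset.sum_congr rfl fun ν _ => ?_
  rw [marginal hμ hk hjoint s hs, marginal hμ hk hjoint s' hs']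

/-- The conditional entropy of a label given parameter, input and other data. -/
lemma cond_label {N : ℕ} {π : Θ → ℝ} {μ : 𝒳 → ℝ} (hμ : ∑ a, μ a = 1)
    {k : 𝒴 → Θ → 𝒳 → ℝ} (hk : ∀ ν a, ∑ b, k b ν a = 1) (hp0 : ∀ ω, 0 ≤ p ω)
    {θ : Ω → Θ} {X : Fin N → Ω → 𝒳} {Y : Fin N → Ω → 𝒴}
    (hjoint : ∀ (ν : Θ) (x : Fin N → 𝒳) (y : Fin N → 𝒴),
      pr p (fun ω => (θ ω, fun s => X s ω, fun s => Y s ω)) (ν, x, y)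
        = π ν * ∏ s : Fin N, μ (x s) * k (y s) ν (x s))
    {m : ℕ} (s : Fin (m + 1) → Fin N) (hs : Function.Injective s) :
    entropy p (fun ω => (Y (s (Fin.last m)) ω, (θ ω, X (s (Fin.last m)) ω,
        fun j : Fin m => (X (s j.castSucc) ω, Y (s j.castSucc) ω))))
      - entropy p (fun ω => (θ ω, X (s (Fin.last m)) ω,
        fun j : Fin m => (X (s j.castSucc) ω, Y (s j.castSucc) ω)))
      = ∑ v : Θ × (Unit → 𝒳 × 𝒴), (π v.1 * ∏ i, μ (v.2 i).1 * k (v.2 i).2 v.1 (v.2 i).1) *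
          (- Real.log (k (v.2 ()).2 v.1 (v.2 ()).1)) := by
  set l := s (Fin.last m) with hl
  set U := fun ω => (θ ω, X l ω,
        fun j : Fin m => (X (s j.castSucc) ω, Y (s j.castSucc) ω)) with hU
  have hfull : ∀ b ν a w, pr p (fun ω => (Y l ω, U ω)) (b, (ν, a, w))
      = (π ν * (∏ j : Fin m, μ (w j).1 * k (w j).2 ν (w j).1) * μ a) * k b ν a := by
    intro b ν a w
    have := marginal hμ hk hjoint s hs ν (Fin.snoc (α := fun _ => 𝒳 × 𝒴) w (a, b))
    rw [Fin.prod_univ_castSucc] at this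
    simp only [Fin.snoc_castSucc, Fin.snoc_last] at this
    rw [mul_assoc, mul_assoc, ← this]
    apply pr_congr
    intro ω
    simp only [hU, Prod.ext_iff, funext_iff, Fin.forall_fin_succ', Fin.snoc_castSucc, Fin.snoc_last]
    tauto
  have hpart : ∀ ν a w, pr p U (ν, a, w)
      = (π ν * (∏ j : Fin m, μ (w j).1 * k (w j).2 ν (w j).1) * μ a) := by
    intro ν a w
    rw [← sum_pr_pair (Y l) U]
    simp_rw [hfull]
    rw [← Finset.mul_sum, hk, mul_one]
  have hrel : ∀ ω, pr p (fun ω => (Y l ω, U ω)) (Y l ω, U ω)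
      = pr p U (U ω) * k (Y l ω) (θ ω) (X l ω) := by
    intro ω
    rw [hU]
    simp only
    rw [← hU, hfull, hpart]
  have hlaw := sum_comp_eq (p := p) (fun ω => (θ ω, fun _ : Unit => (X l ω, Y l ω)))
    (fun v => - Real.log (k (v.2 ()).2 v.1 (v.2 ()).1))
  have hm := marginal hμ hk hjoint (fun _ : Unit => l) (fun _ _ _ => rfl)
  have hlaw2 : ∑ ω, p ω * (- Real.log (k (Y l ω) (θ ω) (X l ω)))
      = ∑ v : Θ × (Unit → 𝒳 × 𝒴), (π v.1 * ∏ i, μ (v.2 i).1 * k (v.2 i).2 v.1 (v.2 i).1) *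
          (- Real.log (k (v.2 ()).2 v.1 (v.2 ()).1)) := by
    rw [hlaw]
    refine Finset.sum_congr rfl fun v _ => ?_
    rw [← hm v.1 v.2]
  rw [← hlaw2, entropy_eq, entropy_eq, ← Finset.sum_sub_distrib]
  refine Finset.sum_congr rfl fun ω _ => ?_
  rcases (hp0 ω).eq_or_lt with h0 | h0
  · simp [← h0]
  · have p1 := h0.trans_le (le_pr hp0 (fun ω => (Y l ω, U ω)) ω)
    have p2 := h0.trans_le (le_pr hp0 U ω)
    rw [hrel] at p1 ⊢
    have p3 : k (Y l ω) (θ ω) (X l ω) ≠ 0 := fun h => by simp [h] at p1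
    rw [Real.log_mul p2.ne' p3]
    ring

end helpers

/-- monotonicity of per-timestep estimation error for iid data. -/
theorem statement7 {Ω Θ 𝒳 𝒴 : Type*} [Fintype Ω] [Fintype Θ] [Fintype 𝒳] [Fintype 𝒴]
    (n : ℕ) (hn : 1 ≤ n)
    (π : Θ → ℝ) (hπ : (∀ ν, 0 ≤ π ν) ∧ ∑ ν, π ν = 1)
    (μ : 𝒳 → ℝ) (hμ : (∀ a, 0 ≤ μ a) ∧ ∑ a, μ a = 1)
    (k : 𝒴 → Θ → 𝒳 → ℝ) (hk : ∀ ν a, (∀ b, 0 ≤ k b ν a) ∧ ∑ b, k b ν a = 1)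
    (p : Ω → ℝ) (hp0 : ∀ ω, 0 ≤ p ω) (hp1 : ∑ ω, p ω = 1)
    (θ : Ω → Θ) (X : Fin (n + 1) → Ω → 𝒳) (Y : Fin (n + 1) → Ω → 𝒴)
    (hjoint : ∀ (ν : Θ) (x : Fin (n + 1) → 𝒳) (y : Fin (n + 1) → 𝒴),
      pr p (fun ω => (θ ω, fun s => X s ω, fun s => Y s ω)) (ν, x, y)
        = π ν * ∏ s : Fin (n + 1), μ (x s) * k (y s) ν (x s)) :
    ∀ (t : ℕ) (ht : t + 1 ≤ n),
      condMutualInfo p (Y ⟨t + 1, by omega⟩) θ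
        (fun ω => ((fun i : Fin (t + 2) => X ⟨(i : ℕ), by have := i.isLt; omega⟩ ω),
                   (fun i : Fin (t + 1) => Y ⟨(i : ℕ), by have := i.isLt; omega⟩ ω)))
      ≤ condMutualInfo p (Y ⟨t, by omega⟩) θ
        (fun ω => ((fun i : Fin (t + 1) => X ⟨(i : ℕ), by have := i.isLt; omega⟩ ω),
                   (fun i : Fin t => Y ⟨(i : ℕ), by have := i.isLt; omega⟩ ω))) := by
  intro t ht
  have hk' : ∀ ν a, ∑ b, k b ν a = 1 := fun ν a => (hk ν a).2
  -- full index maps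
  let S1 : Fin (t + 1) → Fin (n + 1) := fun i => ⟨i, by omega⟩
  let S2 : Fin (t + 2) → Fin (n + 1) := fun i => ⟨i, by omega⟩
  let S3 : Fin (t + 1) → Fin (n + 1) := fun i => ⟨if (i : ℕ) < t then i else t + 1, by
    split_ifs <;> omega⟩
  have i1 : Function.Injective S1 := fun a b h => by
    simp only [S1, Fin.mk.injEq] at h; exact Fin.ext h
  have i2 : Function.Injective S2 := fun a b h => by
    simp only [S2, Fin.mk.injEq] at h; exact Fin.ext h
  have i3 : Function.Injective S3 := fun a b h => by
    simp only [S3, Fin.mk.injEq] at h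
    apply Fin.ext
    split_ifs at h <;> omega
  have c1 := cond_label hμ.2 hk' hp0 hjoint S1 i1
  have c2 := cond_label hμ.2 hk' hp0 hjoint S2 i2
  rw [← c1] at c2
  have ex := marginal' hμ.2 hk' hjoint S3 S1 i3 i1
  have e1 := entropy_map_congr ex (fun v : Fin (t + 1) → 𝒳 × 𝒴 =>
    ((v (Fin.last t)).2, ((v (Fin.last t)).1, fun j : Fin t => v j.castSucc)))
  have e2 := entropy_map_congr ex (fun v : Fin (t + 1) → 𝒳 × 𝒴 =>
    ((v (Fin.last t)).1, fun j : Fin t => v j.castSucc))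
  have ss := strong_subadd hp0 hp1 (Y ⟨t + 1, by omega⟩)
    (fun ω => (X ⟨t, by omega⟩ ω, Y ⟨t, by omega⟩ ω))
    (fun ω => (X ⟨t + 1, by omega⟩ ω, fun j : Fin t =>
      (X ⟨j, by omega⟩ ω, Y ⟨j, by omega⟩ ω)))
  simp only [S1, S2, S3, Fin.val_last, Fin.val_castSucc, lt_irrefl, if_false, Fin.is_lt,
    if_true] at c2 e1 e2
  unfold condMutualInfo
  have r0 : entropy p (fun ω => (Y ⟨t+1, by omega⟩ ω, ((fun i : Fin (t + 2) => X ⟨(i : ℕ), by have := i.isLt; omega⟩ ω),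
                   (fun i : Fin (t + 1) => Y ⟨(i : ℕ), by have := i.isLt; omega⟩ ω))))
      = entropy p (fun ω => ((Y ⟨t+1, by omega⟩ ω, (X ⟨t, by omega⟩ ω, Y ⟨t, by omega⟩ ω)), (X ⟨t+1, by omega⟩ ω, fun j : Fin (t) => (X ⟨j, by omega⟩ ω, Y ⟨j, by omega⟩ ω)))) := entropy_congr (by
    intro ω ω'
    simp only [Prod.ext_iff, funext_iff, Fin.forall_fin_succ', Fin.val_last, Fin.val_castSucc,
      forall_and]
    tauto)
  have r1 : entropy p (fun ω => (θ ω, ((fun i : Fin (t + 2) => X ⟨(i : ℕ), by have := i.isLt; omega⟩ ω),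
                   (fun i : Fin (t + 1) => Y ⟨(i : ℕ), by have := i.isLt; omega⟩ ω))))
      = entropy p (fun ω => (θ ω, X ⟨t+1, by omega⟩ ω, fun j : Fin (t+1) => (X ⟨j, by omega⟩ ω, Y ⟨j, by omega⟩ ω))) := entropy_congr (by
    intro ω ω'
    simp only [Prod.ext_iff, funext_iff, Fin.forall_fin_succ', Fin.val_last, Fin.val_castSucc,
      forall_and]
    tauto)
  have r2 : entropy p (fun ω => ((Y ⟨t+1, by omega⟩ ω, θ ω), ((fun i : Fin (t + 2) => X ⟨(i : ℕ), by have := i.isLt; omega⟩ ω),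
                   (fun i : Fin (t + 1) => Y ⟨(i : ℕ), by have := i.isLt; omega⟩ ω))))
      = entropy p (fun ω => (Y ⟨t+1, by omega⟩ ω, (θ ω, X ⟨t+1, by omega⟩ ω, fun j : Fin (t+1) => (X ⟨j, by omega⟩ ω, Y ⟨j, by omega⟩ ω)))) := entropy_congr (by
    intro ω ω'
    simp only [Prod.ext_iff, funext_iff, Fin.forall_fin_succ', Fin.val_last, Fin.val_castSucc,
      forall_and]
    tauto)
  have r3 : entropy p (fun ω => ((fun i : Fin (t + 2) => X ⟨(i : ℕ), by have := i.isLt; omega⟩ ω),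
                   (fun i : Fin (t + 1) => Y ⟨(i : ℕ), by have := i.isLt; omega⟩ ω)))
      = entropy p (fun ω => ((X ⟨t, by omega⟩ ω, Y ⟨t, by omega⟩ ω), (X ⟨t+1, by omega⟩ ω, fun j : Fin (t) => (X ⟨j, by omega⟩ ω, Y ⟨j, by omega⟩ ω)))) := entropy_congr (by
    intro ω ω'
    simp only [Prod.ext_iff, funext_iff, Fin.forall_fin_succ', Fin.val_last, Fin.val_castSucc,
      forall_and]
    tauto)
  have r4 : entropy p (fun ω => (Y ⟨t, by omega⟩ ω, ((fun i : Fin (t + 1) => X ⟨(i : ℕ), by have := i.isLt; omega⟩ ω),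
                   (fun i : Fin t => Y ⟨(i : ℕ), by have := i.isLt; omega⟩ ω))))
      = entropy p (fun ω => (Y ⟨t, by omega⟩ ω, (X ⟨t, by omega⟩ ω, fun j : Fin (t) => (X ⟨j, by omega⟩ ω, Y ⟨j, by omega⟩ ω)))) := entropy_congr (by
    intro ω ω'
    simp only [Prod.ext_iff, funext_iff, Fin.forall_fin_succ', Fin.val_last, Fin.val_castSucc,
      forall_and]
    tauto)
  have r5 : entropy p (fun ω => (θ ω, ((fun i : Fin (t + 1) => X ⟨(i : ℕ), by have := i.isLt; omega⟩ ω),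
                   (fun i : Fin t => Y ⟨(i : ℕ), by have := i.isLt; omega⟩ ω))))
      = entropy p (fun ω => (θ ω, X ⟨t, by omega⟩ ω, fun j : Fin (t) => (X ⟨j, by omega⟩ ω, Y ⟨j, by omega⟩ ω))) := entropy_congr (by
    intro ω ω'
    simp only [Prod.ext_iff, funext_iff, Fin.forall_fin_succ', Fin.val_last, Fin.val_castSucc,
      forall_and]
    tauto)
  have r6 : entropy p (fun ω => ((Y ⟨t, by omega⟩ ω, θ ω), ((fun i : Fin (t + 1) => X ⟨(i : ℕ), by have := i.isLt; omega⟩ ω),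
                   (fun i : Fin t => Y ⟨(i : ℕ), by have := i.isLt; omega⟩ ω))))
      = entropy p (fun ω => (Y ⟨t, by omega⟩ ω, (θ ω, X ⟨t, by omega⟩ ω, fun j : Fin (t) => (X ⟨j, by omega⟩ ω, Y ⟨j, by omega⟩ ω)))) := entropy_congr (by
    intro ω ω'
    simp only [Prod.ext_iff, funext_iff, Fin.forall_fin_succ', Fin.val_last, Fin.val_castSucc,
      forall_and]
    tauto)
  have r7 : entropy p (fun ω => ((fun i : Fin (t + 1) => X ⟨(i : ℕ), by have := i.isLt; omega⟩ ω),
                   (fun i : Fin t => Y ⟨(i : ℕ), by have := i.isLt; omega⟩ ω)))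
      = entropy p (fun ω => (X ⟨t, by omega⟩ ω, fun j : Fin (t) => (X ⟨j, by omega⟩ ω, Y ⟨j, by omega⟩ ω))) := entropy_congr (by
    intro ω ω'
    simp only [Prod.ext_iff, funext_iff, Fin.forall_fin_succ', Fin.val_last, Fin.val_castSucc,
      forall_and]
    tauto)
  rw [r0, r1, r2, r3, r4, r5, r6, r7]
  linarith

end
end

section
/- Let r, K, p be positive integers, A ∈ ℝ^{r×r}, V ∈ ℝ^{p×r}, and let U, Ũ ∈ ℝ^{r×K} be matrices each of whose columns has ℓ2 norm at most 1. Define F(U) = Clip( V · U · Softmax( UᵀAU / √r ) ) ∈ ℝ^{p×K}, and similarly F(Ũ). Then ‖F(U) − F(Ũ)‖_F² ≤ 2K · ‖V‖_σ² · ( 1 + 4K·‖A‖_σ² / r ) · ‖U − Ũ‖_F², i.e., a single softmax self-attention transformer layer is Lipschitz in its input with squared Lipschitz constant 2K‖V‖_σ²(1 + 4K‖A‖_σ²/r). -/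
/-!
Statement 17 (transformer layer Lipschitz bound): a single softmax self-attention layer
`F(U) = Clip(V · U · Softmax(UᵀAU/√r))` acting on matrices `U ∈ ℝ^{r×K}` whose columns have
ℓ2 norm at most 1 satisfies
`‖F(U) − F(Ũ)‖_F² ≤ 2K‖V‖_σ²(1 + 4K‖A‖_σ²/r)·‖U − Ũ‖_F²`.
-/

noncomputable section

/-- Squared Frobenius norm of a real matrix. -/
def frobSq {m n : Type*} [Fintype m] [Fintype n] (M : Matrix m n ℝ) : ℝ :=
  ∑ i, ∑ j, (M i j) ^ 2

/-- ℓ2 operator norm of a real matrix. -/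
def opNorm {m n : ℕ} (M : Matrix (Fin m) (Fin n) ℝ) : ℝ :=
  ‖LinearMap.toContinuousLinearMap (Matrix.toEuclideanLin M)‖

/-- Columnwise softmax of a square matrix. -/
def softmaxCols {K : ℕ} (M : Matrix (Fin K) (Fin K) ℝ) : Matrix (Fin K) (Fin K) ℝ :=
  Matrix.of fun i j => Real.exp (M i j) / ∑ l, Real.exp (M l j)

/-- Columnwise clipping: rescale each column to have ℓ2 norm at most 1. -/
def clipCols {m n : Type*} [Fintype m] (W : Matrix m n ℝ) : Matrix m n ℝ :=
  Matrix.of fun i j => W i j / max 1 (Real.sqrt (∑ i', (W i' j) ^ 2))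

/-- A single softmax self-attention transformer layer. -/
def layer {r K p : ℕ} (A : Matrix (Fin r) (Fin r) ℝ) (V : Matrix (Fin p) (Fin r) ℝ)
    (U : Matrix (Fin r) (Fin K) ℝ) : Matrix (Fin p) (Fin K) ℝ :=
  clipCols (V * U * softmaxCols ((Real.sqrt r)⁻¹ • (U.transpose * A * U)))

lemma frobSq_nonneg' {m n : Type*} [Fintype m] [Fintype n] (M : Matrix m n ℝ) : 0 ≤ frobSq M :=
  Finset.sum_nonneg fun _ _ => Finset.sum_nonneg fun _ _ => sq_nonneg _

lemma frobSq_comm' {m n : Type*} [Fintype m] [Fintype n] (M : Matrix m n ℝ) :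
    frobSq M = ∑ j, ∑ i, (M i j) ^ 2 := Finset.sum_comm

lemma frobSq_mul_le' {m n k : Type*} [Fintype m] [Fintype n] [Fintype k]
    (M : Matrix m n ℝ) (N : Matrix n k ℝ) : frobSq (M * N) ≤ frobSq M * frobSq N := by
  rw [frobSq_comm' N]
  unfold frobSq
  rw [Finset.sum_mul_sum]
  refine Finset.sum_le_sum fun i _ => Finset.sum_le_sum fun j _ => ?_
  rw [Matrix.mul_apply]
  exact Finset.sum_mul_sq_le_sq_mul_sq _ _ _

lemma frobSq_add_le' {m n : Type*} [Fintype m] [Fintype n]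
    (M N : Matrix m n ℝ) : frobSq (M + N) ≤ 2 * (frobSq M + frobSq N) := by
  unfold frobSq
  rw [← Finset.sum_add_distrib, Finset.mul_sum]
  refine Finset.sum_le_sum fun i _ => ?_
  rw [← Finset.sum_add_distrib, Finset.mul_sum]
  refine Finset.sum_le_sum fun j _ => ?_
  rw [Matrix.add_apply]
  nlinarith [sq_nonneg (M i j - N i j)]

lemma opNorm_mulVec' {m n : ℕ} (M : Matrix (Fin m) (Fin n) ℝ) (x : Fin n → ℝ) :
    ∑ i, (∑ k, M i k * x k) ^ 2 ≤ opNorm M ^ 2 * ∑ k, x k ^ 2 := by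
  have h := (LinearMap.toContinuousLinearMap (Matrix.toEuclideanLin M)).le_opNorm (WithLp.toLp 2 x)
  have h2 := pow_le_pow_left₀ (norm_nonneg _) h 2
  rw [mul_pow, EuclideanSpace.norm_sq_eq, EuclideanSpace.norm_sq_eq] at h2
  simpa [Matrix.toEuclideanLin, Matrix.mulVec, dotProduct, opNorm] using h2

lemma frobSq_opNorm_mul' {m n k : ℕ} (M : Matrix (Fin m) (Fin n) ℝ) (N : Matrix (Fin n) (Fin k) ℝ) :
    frobSq (M * N) ≤ opNorm M ^ 2 * frobSq N := by
  rw [frobSq_comm', frobSq_comm' N, Finset.mul_sum]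
  refine Finset.sum_le_sum fun j _ => ?_
  simpa [Matrix.mul_apply] using opNorm_mulVec' M (fun i => N i j)

lemma bilin' {n : ℕ} (A : Matrix (Fin n) (Fin n) ℝ) (x y : Fin n → ℝ) :
    (∑ i, x i * ∑ k, A i k * y k) ^ 2 ≤ opNorm A ^ 2 * (∑ i, x i ^ 2) * ∑ k, y k ^ 2 := by
  refine (Finset.sum_mul_sq_le_sq_mul_sq _ _ _).trans ?_
  have := mul_le_mul_of_nonneg_left (opNorm_mulVec' A y)
    (Finset.sum_nonneg fun i (_ : i ∈ Finset.univ) => sq_nonneg (x i))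
  linarith

lemma log_mono' {a b : ℝ} (ha : 0 < a) (hb : 0 < b) (ha1 : a ≤ 1) (hb1 : b ≤ 1) :
    (a - b) ^ 2 ≤ (a - b) * (Real.log a - Real.log b) := by
  wlog hab : b ≤ a generalizing a b
  · have := this hb ha hb1 ha1 (le_of_not_ge hab)
    linarith
  have h := Real.one_sub_inv_le_log_of_pos (div_pos ha hb)
  rw [Real.log_div ha.ne' hb.ne'] at h
  have h3 : a - b ≤ 1 - (a / b)⁻¹ := by
    rw [inv_div]
    have : (1 - b / a) = (a - b) / a := by field_simp
    rw [this, le_div_iff₀ ha]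
    nlinarith
  rw [sq]
  exact mul_le_mul_of_nonneg_left (h3.trans h) (by linarith)

lemma softmax_vec' {K : ℕ} (hK : 0 < K) (x y : Fin K → ℝ) :
    ∑ i, (Real.exp (x i) / ∑ l, Real.exp (x l) - Real.exp (y i) / ∑ l, Real.exp (y l)) ^ 2
      ≤ ∑ i, (x i - y i) ^ 2 := by
  haveI : Nonempty (Fin K) := ⟨⟨0, hK⟩⟩
  have key : ∀ z : Fin K → ℝ, 0 < ∑ l, Real.exp (z l) := fun z =>
    Finset.sum_pos (fun _ _ => Real.exp_pos _) Finset.univ_nonempty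
  have le1 : ∀ (z : Fin K → ℝ) i, Real.exp (z i) / ∑ l, Real.exp (z l) ≤ 1 := fun z i => by
    rw [div_le_one (key z)]
    exact Finset.single_le_sum (f := fun l => Real.exp (z l))
      (fun _ _ => (Real.exp_pos _).le) (Finset.mem_univ i)
  have sum1 : ∀ (z : Fin K → ℝ), ∑ i, Real.exp (z i) / ∑ l, Real.exp (z l) = 1 := fun z => by
    rw [← Finset.sum_div, div_self (key z).ne']
  have hx := key x
  have hy := key y
  have lx := le1 x
  have ly := le1 y
  have sx := sum1 x
  have sy := sum1 y
  set X := ∑ l, Real.exp (x l)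
  set Y := ∑ l, Real.exp (y l)
  have h1 : ∀ i, (Real.exp (x i) / X - Real.exp (y i) / Y) ^ 2 ≤
      (x i - y i) ^ 2 + 2 * (Real.log Y - Real.log X) * (Real.exp (x i) / X - Real.exp (y i) / Y) := by
    intro i
    have h := log_mono' (div_pos (Real.exp_pos (x i)) hx) (div_pos (Real.exp_pos (y i)) hy)
      (lx i) (ly i)
    rw [Real.log_div (Real.exp_pos _).ne' hx.ne', Real.log_div (Real.exp_pos _).ne' hy.ne',
      Real.log_exp, Real.log_exp] at h
    nlinarith [sq_nonneg ((Real.exp (x i) / X - Real.exp (y i) / Y) - (x i - y i))]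
  refine (Finset.sum_le_sum fun i _ => h1 i).trans ?_
  rw [Finset.sum_add_distrib, ← Finset.mul_sum, Finset.sum_sub_distrib, sx, sy]
  simp

lemma softmax_frob' {K : ℕ} (hK : 0 < K) (M N : Matrix (Fin K) (Fin K) ℝ) :
    frobSq (softmaxCols M - softmaxCols N) ≤ frobSq (M - N) := by
  rw [frobSq_comm', frobSq_comm' (M - N)]
  refine Finset.sum_le_sum fun j _ => ?_
  simpa [softmaxCols] using softmax_vec' hK (fun i => M i j) (fun i => N i j)

lemma softmax_le' {K : ℕ} (M : Matrix (Fin K) (Fin K) ℝ) : frobSq (softmaxCols M) ≤ K := by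
  rw [frobSq_comm']
  have : ∀ j ∈ (Finset.univ : Finset (Fin K)), ∑ i, (softmaxCols M i j) ^ 2 ≤ 1 := by
    intro j _
    have hp : 0 < ∑ l, Real.exp (M l j) :=
      Finset.sum_pos (fun _ _ => Real.exp_pos _) ⟨j, Finset.mem_univ _⟩
    have e : ∑ i, softmaxCols M i j = 1 := by
      simp only [softmaxCols, Matrix.of_apply]
      rw [← Finset.sum_div, div_self hp.ne']
    rw [← e]
    refine Finset.sum_le_sum fun i _ => ?_
    have h0 : 0 ≤ softmaxCols M i j := by
      simp only [softmaxCols, Matrix.of_apply]; positivity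
    have h1 : softmaxCols M i j ≤ 1 := by
      simp only [softmaxCols, Matrix.of_apply]
      rw [div_le_one hp]
      exact Finset.single_le_sum (f := fun l => Real.exp (M l j))
        (fun _ _ => (Real.exp_pos _).le) (Finset.mem_univ i)
    nlinarith
  simpa using Finset.sum_le_sum this

lemma clip_real' {n m R : ℝ} (hn : 0 ≤ n) (hm : 0 ≤ m) (hR : R ≤ n * m) :
    n ^ 2 / (max 1 n) ^ 2 + m ^ 2 / (max 1 m) ^ 2 - 2 * (R / (max 1 n * max 1 m))
      ≤ n ^ 2 + m ^ 2 - 2 * R := by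
  rcases le_total n 1 with h1 | h1 <;> rcases le_total m 1 with h2 | h2
  · simp [max_eq_left h1, max_eq_left h2]
  · rw [max_eq_left h1, max_eq_right h2]
    have hm0 : 0 < m := by linarith
    rw [div_self (by positivity)]
    have : R * (1 - 1 / m) ≤ n * m * (1 - 1 / m) :=
      mul_le_mul_of_nonneg_right hR (by rw [sub_nonneg, div_le_one hm0]; exact h2)
    have e : n * m * (1 - 1 / m) = n * (m - 1) := by field_simp
    have e2 : R * (1 - 1 / m) = R - R / (1 * m) := by field_simp
    nlinarith
  · rw [max_eq_left h2, max_eq_right h1]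
    have hm0 : 0 < n := by linarith
    rw [div_self (by positivity)]
    have : R * (1 - 1 / n) ≤ n * m * (1 - 1 / n) :=
      mul_le_mul_of_nonneg_right hR (by rw [sub_nonneg, div_le_one hm0]; exact h1)
    have e : n * m * (1 - 1 / n) = m * (n - 1) := by field_simp
    have e2 : R * (1 - 1 / n) = R - R / (n * 1) := by field_simp
    nlinarith
  · rw [max_eq_right h2, max_eq_right h1]
    have hn0 : 0 < n := by linarith
    have hm0 : 0 < m := by linarith
    rw [div_self (by positivity), div_self (by positivity)]
    have : R * (1 - 1 / (n * m)) ≤ n * m * (1 - 1 / (n * m)) :=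
      mul_le_mul_of_nonneg_right hR
        (by rw [sub_nonneg, div_le_one (by positivity)]; nlinarith)
    have e : n * m * (1 - 1 / (n * m)) = n * m - 1 := by field_simp
    have e2 : R * (1 - 1 / (n * m)) = R - R / (n * m) := by field_simp
    nlinarith [sq_nonneg (n - m)]

lemma clip_vec' {m : Type*} [Fintype m] (w v : m → ℝ) :
    ∑ i, (w i / max 1 (Real.sqrt (∑ i', (w i') ^ 2)) - v i / max 1 (Real.sqrt (∑ i', (v i') ^ 2))) ^ 2
      ≤ ∑ i, (w i - v i) ^ 2 := by
  have gen : ∀ a b : ℝ, ∑ i, (w i / a - v i / b) ^ 2 =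
      (∑ i, w i ^ 2) / a ^ 2 + (∑ i, v i ^ 2) / b ^ 2 - 2 * ((∑ i, w i * v i) / (a * b)) := by
    intro a b
    rw [Finset.sum_div, Finset.sum_div, Finset.sum_div, Finset.mul_sum, ← Finset.sum_add_distrib,
      ← Finset.sum_sub_distrib]
    refine Finset.sum_congr rfl fun i _ => ?_
    rw [← div_pow, ← div_pow, ← div_mul_div_comm]
    ring
  have g1 := gen 1 1
  simp only [div_one, one_pow, mul_one] at g1
  rw [gen, g1]
  have h := clip_real' (Real.sqrt_nonneg (∑ i, w i ^ 2)) (Real.sqrt_nonneg (∑ i, v i ^ 2))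
    (Real.sum_mul_le_sqrt_mul_sqrt Finset.univ w v)
  rwa [Real.sq_sqrt (Finset.sum_nonneg fun _ _ => sq_nonneg _),
    Real.sq_sqrt (Finset.sum_nonneg fun _ _ => sq_nonneg _)] at h

lemma clip_frob' {m n : Type*} [Fintype m] [Fintype n] (W X : Matrix m n ℝ) :
    frobSq (clipCols W - clipCols X) ≤ frobSq (W - X) := by
  rw [frobSq_comm', frobSq_comm' (W - X)]
  refine Finset.sum_le_sum fun j _ => ?_
  simpa [clipCols] using clip_vec' (fun i => W i j) (fun i => X i j)

lemma gram_frob' {r K : ℕ} (A : Matrix (Fin r) (Fin r) ℝ) (U U' : Matrix (Fin r) (Fin K) ℝ)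
    (hU : ∀ j, ∑ i, (U i j) ^ 2 ≤ 1) (hU' : ∀ j, ∑ i, (U' i j) ^ 2 ≤ 1) :
    frobSq (U.transpose * A * U - U'.transpose * A * U') ≤
      4 * K * opNorm A ^ 2 * frobSq (U - U') := by
  have e : U.transpose * A * U - U'.transpose * A * U' =
      (U - U').transpose * (A * U) + U'.transpose * (A * (U - U')) := by
    rw [Matrix.transpose_sub, Matrix.sub_mul, Matrix.mul_sub, Matrix.mul_sub, Matrix.mul_assoc,
      Matrix.mul_assoc]
    abel
  rw [e]
  have ent : ∀ (P Q : Matrix (Fin r) (Fin K) ℝ) (i j : Fin K),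
      ((P.transpose * (A * Q)) i j) ^ 2 ≤
        opNorm A ^ 2 * (∑ k, P k i ^ 2) * ∑ k, Q k j ^ 2 := fun P Q i j => by
    simpa [Matrix.mul_apply] using bilin' A (fun k => P k i) (fun k => Q k j)
  have nn : ∀ (P : Matrix (Fin r) (Fin K) ℝ) j, 0 ≤ ∑ k, P k j ^ 2 := fun P j =>
    Finset.sum_nonneg fun _ _ => sq_nonneg _
  have hcard : (Finset.univ : Finset (Fin K)).card = K := by simp
  have h1 : frobSq ((U - U').transpose * (A * U)) ≤ K * (opNorm A ^ 2 * frobSq (U - U')) := by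
    rw [frobSq_comm' (U - U'), Finset.mul_sum, Finset.mul_sum]
    refine Finset.sum_le_sum fun i _ => ?_
    calc _ ≤ ∑ j : Fin K, opNorm A ^ 2 * (∑ k, (U - U') k i ^ 2) := by
          refine Finset.sum_le_sum fun j _ => (ent _ _ i j).trans ?_
          exact mul_le_of_le_one_right (mul_nonneg (sq_nonneg _) (nn _ _)) (hU j)
      _ = _ := by simp
  have h2 : frobSq (U'.transpose * (A * (U - U'))) ≤ K * (opNorm A ^ 2 * frobSq (U - U')) := by
    rw [frobSq_comm' (U - U'), Finset.mul_sum, Finset.mul_sum, frobSq_comm']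
    refine Finset.sum_le_sum fun i _ => ?_
    calc _ ≤ ∑ j : Fin K, opNorm A ^ 2 * (∑ k, (U - U') k i ^ 2) := by
          refine Finset.sum_le_sum fun j _ => (ent _ _ j i).trans ?_
          refine mul_le_mul_of_nonneg_right ?_ (nn _ _)
          exact mul_le_of_le_one_right (sq_nonneg _) (hU' j)
      _ = _ := by simp
  refine (frobSq_add_le' _ _).trans ?_
  linarith

/-- transformer layer Lipschitz bound. -/
theorem statement17 (r K p : ℕ) (hr : 0 < r) (hK : 0 < K) (hp : 0 < p)
    (A : Matrix (Fin r) (Fin r) ℝ) (V : Matrix (Fin p) (Fin r) ℝ)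
    (U U' : Matrix (Fin r) (Fin K) ℝ)
    (hU : ∀ j, Real.sqrt (∑ i, (U i j) ^ 2) ≤ 1)
    (hU' : ∀ j, Real.sqrt (∑ i, (U' i j) ^ 2) ≤ 1) :
    frobSq (layer A V U - layer A V U')
      ≤ 2 * K * opNorm V ^ 2 * (1 + 4 * K * opNorm A ^ 2 / r) * frobSq (U - U') := by
  have cU : ∀ j, ∑ i, (U i j) ^ 2 ≤ 1 := fun j => by simpa [Real.sqrt_le_one] using hU j
  have cU' : ∀ j, ∑ i, (U' i j) ^ 2 ≤ 1 := fun j => by simpa [Real.sqrt_le_one] using hU' j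
  have hUK : frobSq U' ≤ K := by
    rw [frobSq_comm']
    simpa using Finset.sum_le_sum fun j (_ : j ∈ Finset.univ) => cU' j
  unfold layer
  refine (clip_frob' _ _).trans ?_
  set M := (Real.sqrt r)⁻¹ • (U.transpose * A * U) with hM
  set M' := (Real.sqrt r)⁻¹ • (U'.transpose * A * U') with hM'
  have e : V * U * softmaxCols M - V * U' * softmaxCols M' =
      V * ((U - U') * softmaxCols M + U' * (softmaxCols M - softmaxCols M')) := by
    rw [Matrix.sub_mul, Matrix.mul_sub, Matrix.mul_assoc, Matrix.mul_assoc, ← Matrix.mul_sub]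
    congr 1
    abel
  rw [e]
  have hr' : (0 : ℝ) < r := by exact_mod_cast hr
  have hK' : (0 : ℝ) ≤ K := by positivity
  have hD := frobSq_nonneg' (U - U')
  have hMM : frobSq (M - M') ≤ 4 * K * opNorm A ^ 2 / r * frobSq (U - U') := by
    have : frobSq (M - M') = (r : ℝ)⁻¹ * frobSq (U.transpose * A * U - U'.transpose * A * U') := by
      rw [hM, hM', ← smul_sub]
      unfold frobSq
      simp only [Matrix.smul_apply, smul_eq_mul, mul_pow, inv_pow, Real.sq_sqrt hr'.le,
        ← Finset.mul_sum]
    rw [this]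
    have := mul_le_mul_of_nonneg_left (gram_frob' A U U' cU cU') (inv_nonneg.2 hr'.le)
    refine this.trans (le_of_eq ?_)
    field_simp
  have t1 : frobSq ((U - U') * softmaxCols M) ≤ frobSq (U - U') * K :=
    (frobSq_mul_le' _ _).trans (mul_le_mul_of_nonneg_left (softmax_le' M) hD)
  have t2 : frobSq (U' * (softmaxCols M - softmaxCols M')) ≤
      K * (4 * K * opNorm A ^ 2 / r * frobSq (U - U')) :=
    (frobSq_mul_le' _ _).trans (mul_le_mul hUK ((softmax_frob' hK M M').trans hMM)
      (frobSq_nonneg' _) hK')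
  calc _ ≤ opNorm V ^ 2 * frobSq ((U - U') * softmaxCols M + U' * (softmaxCols M - softmaxCols M')) :=
        frobSq_opNorm_mul' _ _
    _ ≤ opNorm V ^ 2 * (2 * (frobSq (U - U') * K + K * (4 * K * opNorm A ^ 2 / r * frobSq (U - U')))) := by
        refine mul_le_mul_of_nonneg_left ((frobSq_add_le' _ _).trans ?_) (sq_nonneg _)
        linarith
    _ = _ := by ring

end
end
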